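/- arXiv:2401.09626 — 6 statements merged into one kernel-verified Lean document; each statement's English description precedes it below -/
import Mathlib

section
/- Let q be a positive squarefree integer and let p be a prime with p ∣ q and p ∤ disc(f). If H_q is locally solvable at p, then the reduction of f modulo p has a root in 𝔽_p, i.e., there exists x₀ ∈ ℤ/pℤ with f(x₀) ≡ 0 (mod p). -/
/-!
Since `q` is squarefree and divisible by `p`, every nonzero `q * y ^ 2` has odd `p`-adic valuation;
in particular `q` is not a square in `ℚ_p`. On the other hand, if the quartic `f` had no root
modulo `p`, then every value `f(x)` would be nonzero of even valuation: it is a unit when `x` is a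
`p`-adic integer, and otherwise it is `x ^ 4` times a unit, because `f` is monic of degree four.
-/

open Polynomial

/-- `H_q : q·y² = f(x)` is locally solvable at the prime `p`: either there is a solution
`(x, y)` in `ℚ_p`, or `q` is a square in `ℚ_p` (points at infinity). -/
def LocallySolvableAt (f : Polynomial ℤ) (q : ℤ) (p : ℕ) [Fact p.Prime] : Prop :=
  (∃ x y : ℚ_[p], (q : ℚ_[p]) * y ^ 2 = (f.map (Int.castRingHom ℚ_[p])).eval x) ∨
    IsSquare ((q : ℚ_[p]))

/-- `H_q` is everywhere locally solvable: solvable over `ℝ` and locally solvable at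
every prime `p`. -/
def EverywhereLocallySolvable (f : Polynomial ℤ) (q : ℤ) : Prop :=
  (∃ x y : ℝ, (q : ℝ) * y ^ 2 = (f.map (Int.castRingHom ℝ)).eval x) ∧
    ∀ (p : ℕ) [Fact p.Prime], LocallySolvableAt f q p

/-- The discriminant of a (monic) quartic polynomial `x⁴ + bx³ + cx² + dx + e`. -/
def quarticDisc (f : Polynomial ℤ) : ℤ :=
  let b := f.coeff 3
  let c := f.coeff 2
  let d := f.coeff 1
  let e := f.coeff 0
  256 * e ^ 3 - 192 * b * d * e ^ 2 - 128 * c ^ 2 * e ^ 2 + 144 * c * d ^ 2 * e -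
    27 * d ^ 4 + 144 * b ^ 2 * c * e ^ 2 - 6 * b ^ 2 * d ^ 2 * e - 80 * b * c ^ 2 * d * e +
    18 * b * c * d ^ 3 + 16 * c ^ 4 * e - 4 * c ^ 3 * d ^ 2 - 27 * b ^ 4 * e ^ 2 +
    18 * b ^ 3 * c * d * e - 4 * b ^ 3 * d ^ 3 - 4 * b ^ 2 * c ^ 3 * e +
    b ^ 2 * c ^ 2 * d ^ 2

/-- A `p`-adic integer with nonzero reduction is a unit. -/
lemma valuation_eq_zero_of_toZMod_ne_zero {p : ℕ} [Fact p.Prime] (z : ℤ_[p])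
    (hz : PadicInt.toZMod z ≠ 0) : (z : ℚ_[p]) ≠ 0 ∧ (z : ℚ_[p]).valuation = 0 := by
  have hne : z ≠ 0 := by
    rintro rfl
    simp at hz
  have hnorm : ‖z‖ = 1 := by
    by_contra h
    have hmem : z ∈ IsLocalRing.maximalIdeal ℤ_[p] := by
      rwa [IsLocalRing.mem_maximalIdeal, mem_nonunits_iff, PadicInt.isUnit_iff]
    rw [← PadicInt.ker_toZMod, RingHom.mem_ker] at hmem
    exact hz hmem
  have hne' : (z : ℚ_[p]) ≠ 0 := fun h => hne (Subtype.ext h)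
  refine ⟨hne', ?_⟩
  have h := Padic.norm_eq_zpow_neg_valuation hne'
  rw [← PadicInt.norm_def, hnorm] at h
  have hp : (1 : ℝ) < p := by exact_mod_cast (Fact.out : p.Prime).one_lt
  have := (zpow_eq_one_iff_right₀ (by positivity) hp.ne').mp h.symm
  omega

lemma valuation_intCast_eq_one {p : ℕ} [Fact p.Prime] {q : ℤ} (hqsf : Squarefree q)
    (hpq : (p : ℤ) ∣ q) : (q : ℚ_[p]).valuation = 1 := by
  have hp : p.Prime := Fact.out
  obtain ⟨m, rfl⟩ := hpq
  have hm : ¬ (p : ℤ) ∣ m := by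
    intro h
    have := hqsf p (mul_dvd_mul_left _ h)
    exact (Nat.prime_iff_prime_int.mp hp).not_isUnit this
  have hm0 : m ≠ 0 := by
    rintro rfl
    simp at hm
  have hp0 : (p : ℚ_[p]) ≠ 0 := by exact_mod_cast hp.ne_zero
  have hm0' : (m : ℚ_[p]) ≠ 0 := by exact_mod_cast hm0
  push_cast
  rw [Padic.valuation_mul hp0 hm0', Padic.valuation_p, Padic.valuation_intCast,
    padicValInt.eq_zero_of_not_dvd hm]
  simp

/-- If the monic quartic `f` has no root modulo `p`, its values on `ℚ_p` are nonzero and of even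
valuation. -/
lemma even_valuation_eval {f : Polynomial ℤ} (hmonic : f.Monic) (hdeg : f.natDegree = 4)
    {p : ℕ} [Fact p.Prime]
    (hroot : ∀ x₀ : ZMod p, (f.map (Int.castRingHom (ZMod p))).eval x₀ ≠ 0) (x : ℚ_[p]) :
    (f.map (Int.castRingHom ℚ_[p])).eval x ≠ 0 ∧
      Even ((f.map (Int.castRingHom ℚ_[p])).eval x).valuation := by
  have h4 : f.coeff 4 = 1 := by
    rw [← hdeg]
    exact hmonic
  have hexp : ∀ {R : Type} [CommRing R] (t : R), (f.map (Int.castRingHom R)).eval t =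
      f.coeff 0 + f.coeff 1 * t + f.coeff 2 * t ^ 2 + f.coeff 3 * t ^ 3 + t ^ 4 := by
    intro R _ t
    rw [eval_map, eval₂_eq_sum_range, hdeg]
    simp [Finset.sum_range_succ, h4]
  rcases le_or_gt ‖x‖ 1 with hx | hx
  · obtain ⟨x, rfl⟩ : ∃ z : ℤ_[p], (z : ℚ_[p]) = x := ⟨⟨x, hx⟩, rfl⟩
    have hz : PadicInt.toZMod ((f.map (Int.castRingHom ℤ_[p])).eval x) ≠ 0 := by
      have := hroot (PadicInt.toZMod x)
      rw [hexp] at this ⊢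
      simpa using this
    obtain ⟨hne, hval⟩ := valuation_eq_zero_of_toZMod_ne_zero _ hz
    have heq : (f.map (Int.castRingHom ℚ_[p])).eval (x : ℚ_[p]) =
        ((f.map (Int.castRingHom ℤ_[p])).eval x : ℤ_[p]) := by
      rw [hexp, hexp]
      push_cast
      rfl
    rw [heq]
    exact ⟨hne, by simp [hval]⟩
  · have hx0 : x ≠ 0 := by
      rintro rfl
      simp at hx
      linarith
    have hlt : ‖x⁻¹‖ < 1 := by
      rw [norm_inv]
      exact inv_lt_one_of_one_lt₀ hx
    obtain ⟨u, hu⟩ : ∃ u : ℤ_[p], (u : ℚ_[p]) = x⁻¹ := ⟨⟨x⁻¹, hlt.le⟩, rfl⟩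
    have hu0 : PadicInt.toZMod u = 0 := by
      rw [← RingHom.mem_ker, PadicInt.ker_toZMod, IsLocalRing.mem_maximalIdeal,
        PadicInt.mem_nonunits, PadicInt.norm_def, hu]
      exact hlt
    -- The reversed polynomial, evaluated at `u = x⁻¹`, is congruent to `1` modulo `p`.
    set g : ℤ_[p] := f.coeff 0 * u ^ 4 + f.coeff 1 * u ^ 3 + f.coeff 2 * u ^ 2 +
      f.coeff 3 * u + 1 with hg
    have hz : PadicInt.toZMod g ≠ 0 := by
      simp [hg, hu0]
    obtain ⟨hne, hval⟩ := valuation_eq_zero_of_toZMod_ne_zero _ hz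
    have heq : (f.map (Int.castRingHom ℚ_[p])).eval x = x ^ 4 * (g : ℚ_[p]) := by
      rw [hexp, hg]
      push_cast
      rw [hu]
      field_simp
    rw [heq]
    refine ⟨mul_ne_zero (pow_ne_zero _ hx0) hne, ?_⟩
    rw [Padic.valuation_mul (pow_ne_zero _ hx0) hne, hval, Padic.valuation_pow]
    exact ⟨2 * x.valuation, by push_cast; ring⟩

/-- if `q` is a positive squarefree integer, `p ∣ q`, `p ∤ disc f`, and `H_q`
is locally solvable at `p`, then `f` has a root modulo `p`. -/
theorem statement1 (f : Polynomial ℤ) (hmonic : f.Monic) (hirr : Irreducible f)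
    (hdeg : f.natDegree = 4) (q : ℤ) (hqpos : 0 < q) (hqsf : Squarefree q)
    (p : ℕ) [Fact p.Prime] (hpq : (p : ℤ) ∣ q) (hpd : ¬ (p : ℤ) ∣ quarticDisc f)
    (hsolv : LocallySolvableAt f q p) :
    ∃ x₀ : ZMod p, (f.map (Int.castRingHom (ZMod p))).eval x₀ = 0 := by
  by_contra! hroot
  have hq0 : (q : ℚ_[p]) ≠ 0 := by exact_mod_cast hqpos.ne'
  have hq := valuation_intCast_eq_one hqsf hpq
  rcases hsolv with ⟨x, y, hxy⟩ | ⟨r, hr⟩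
  · obtain ⟨hne, k, hk⟩ := even_valuation_eval hmonic hdeg hroot x
    rw [← hxy] at hne hk
    have hy0 : y ≠ 0 := by
      rintro rfl
      simp at hne
    rw [Padic.valuation_mul hq0 (pow_ne_zero _ hy0), hq, Padic.valuation_pow] at hk
    push_cast at hk
    omega
  · have hr0 : r ≠ 0 := by
      rintro rfl
      simp at hr
      omega
    rw [hr, Padic.valuation_mul hr0 hr0] at hq
    omega
end

section
/- Let q be a nonzero integer and let p be a prime with p ∤ 2·q·disc(f). Then H_q is locally solvable at p; that is, either there exist x, y ∈ ℚ_p with q·y² = f(x), or q is a square in ℚ_p. -/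
/-!
Reduce modulo `p`. A solution of `q y² = f(x)` in `𝔽_p` lifts to `ℤ_p` by Hensel's lemma: in `y`
when `f(x) ≠ 0`, and in `x` (with `y = 0`) when `f(x) = 0`, since the discriminant is nonzero
mod `p` and so roots of `f` mod `p` are simple. If `q` is a square
mod `p`, it is one in `ℚ_p`, by Hensel again. If there is no solution mod `p` and `q` is a
non-square, then `f(x)` is a nonzero square for *every* `x ∈ 𝔽_p`. This would contradict the Hasse
bound for `y² = f(x)`; here it is excluded directly (`quarticDiscAux_eq_zero`).

Put `m = (p-1)/2` and `P = X^p - X`. As `f^m` takes the value `1` everywhere,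
`f^m = 1 + P g`, with `g` monic of degree `p - 2`. Differentiating, and using `2m = -1`, gives
`2 f g - f' = P H` with `H = 2 f g' + f' g`, hence `deg H = 2`. Differentiating again gives
`4 f H + f'² - 2 f f'' = P (2 f H' - f' H)`. The left side has degree at most `6`, so for `p ≥ 7`
both sides vanish. Then `2 f H' = f' H`, and comparing coefficients shows that `f` is the
square of the monic quadratic proportional to `H`, so the discriminant is zero.
The primes `3` and `5` are a finite check.
-/

open Polynomial

/-- The discriminant of `x⁴ + bx³ + cx² + dx + e` over a commutative ring. -/
def quarticDiscAux {R : Type*} [CommRing R] (b c d e : R) : R :=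
  256 * e ^ 3 - 192 * b * d * e ^ 2 - 128 * c ^ 2 * e ^ 2 + 144 * c * d ^ 2 * e -
    27 * d ^ 4 + 144 * b ^ 2 * c * e ^ 2 - 6 * b ^ 2 * d ^ 2 * e - 80 * b * c ^ 2 * d * e +
    18 * b * c * d ^ 3 + 16 * c ^ 4 * e - 4 * c ^ 3 * d ^ 2 - 27 * b ^ 4 * e ^ 2 +
    18 * b ^ 3 * c * d * e - 4 * b ^ 3 * d ^ 3 - 4 * b ^ 2 * c ^ 3 * e +
    b ^ 2 * c ^ 2 * d ^ 2

lemma quarticDiscAux_three : ∀ b c d e : ZMod 3,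
    (∀ x : ZMod 3, (x ^ 4 + b * x ^ 3 + c * x ^ 2 + d * x + e) ^ 1 = 1) →
      quarticDiscAux b c d e = 0 := by
  unfold quarticDiscAux
  decide +kernel

lemma quarticDiscAux_five : ∀ b c d e : ZMod 5,
    (∀ x : ZMod 5, (x ^ 4 + b * x ^ 3 + c * x ^ 2 + d * x + e) ^ 2 = 1) →
      quarticDiscAux b c d e = 0 := by
  unfold quarticDiscAux
  decide +kernel

/-- If the discriminant is nonzero, every root is simple. -/
lemma quarticDiscAux_eq_zero_of_double_root {R : Type*} [CommRing R] {b c d e x : R}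
    (h0 : x ^ 4 + b * x ^ 3 + c * x ^ 2 + d * x + e = 0)
    (h1 : 4 * x ^ 3 + 3 * b * x ^ 2 + 2 * c * x + d = 0) : quarticDiscAux b c d e = 0 := by
  obtain rfl : d = -(4 * x ^ 3 + 3 * b * x ^ 2 + 2 * c * x) := by linear_combination h1
  obtain rfl : e = 3 * x ^ 4 + 2 * b * x ^ 3 + c * x ^ 2 := by linear_combination h0
  unfold quarticDiscAux
  ring

/-- The identity `2 f H' = f' H` says that `H² / f` has derivative zero. For `H` of degree two and
characteristic different from `2` and `3` it forces `f` to be the square of the monic quadratic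
proportional to `H`, hence of discriminant zero. -/
lemma quarticDiscAux_eq_zero_of_ode {F : Type*} [Field F] (h2 : (2 : F) ≠ 0) (h3 : (3 : F) ≠ 0)
    {b c d e : F} {H : F[X]} (hH : H.natDegree = 2)
    (hode : 2 * (X ^ 4 + C b * X ^ 3 + C c * X ^ 2 + C d * X + C e) * derivative H =
      derivative (X ^ 4 + C b * X ^ 3 + C c * X ^ 2 + C d * X + C e) * H) :
    quarticDiscAux b c d e = 0 := by
  obtain ⟨a, ha, u, v, rfl⟩ : ∃ a : F, a ≠ 0 ∧ ∃ u v : F,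
      H = C a * (X ^ 2 + C u * X + C v) := by
    have hl : H.coeff 2 ≠ 0 := by
      rw [← hH, coeff_natDegree, leadingCoeff_ne_zero]
      rintro rfl
      simp at hH
    refine ⟨H.coeff 2, hl, H.coeff 1 / H.coeff 2, H.coeff 0 / H.coeff 2, ?_⟩
    conv_lhs => rw [H.as_sum_range_C_mul_X_pow, hH]
    simp only [Finset.sum_range_succ, Finset.sum_range_zero, mul_add, ← mul_assoc, ← C_mul,
      mul_div_cancel₀ _ hl]
    ring
  have hode' : C (b - 2 * u) * X ^ 4 +
      C (2 * c - b * u - 4 * v) * X ^ 3 + C (3 * d - 3 * b * v) * X ^ 2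
      + C (4 * e + d * u - 2 * c * v) * X + C (2 * e * u - d * v) = 0 := by
    have hc : C a ≠ (0 : F[X]) := by simpa using ha
    apply mul_left_cancel₀ hc
    simp only [derivative_add, derivative_mul, derivative_C, derivative_X_pow, derivative_X] at hode
    simp only [C_sub, C_mul, C_add] at hode ⊢
    simp only [map_ofNat, Nat.cast_ofNat] at hode ⊢
    linear_combination hode
  have c4 := congrArg (fun r => coeff r 4) hode'
  have c3 := congrArg (fun r => coeff r 3) hode'
  have c2 := congrArg (fun r => coeff r 2) hode'
  have c1 := congrArg (fun r => coeff r 1) hode'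
  simp only [coeff_add, coeff_C_mul, coeff_X_pow, coeff_X, coeff_C, coeff_zero] at c4 c3 c2 c1
  norm_num at c4 c3 c2 c1
  -- The coefficients of `f` turn out to be those of `(X² + uX + v)²`.
  obtain rfl : b = 2 * u := by linear_combination c4
  obtain rfl : c = 2 * v + u ^ 2 := by
    apply mul_left_cancel₀ h2
    linear_combination c3
  obtain rfl : d = 2 * u * v := by
    apply mul_left_cancel₀ h3
    linear_combination c2
  obtain rfl : e = v ^ 2 := by
    apply mul_left_cancel₀ h2
    apply mul_left_cancel₀ h2
    linear_combination c1
  unfold quarticDiscAux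
  ring

/-- A monic quartic over `𝔽_p` (`p` odd) all of whose values are nonzero squares has discriminant
zero. This is the substitute for the Hasse bound. -/
theorem quarticDiscAux_eq_zero (p : ℕ) [Fact p.Prime] (hp : p ≠ 2) (b c d e : ZMod p)
    (hf : ∀ x : ZMod p, (x ^ 4 + b * x ^ 3 + c * x ^ 2 + d * x + e) ^ (p / 2) = 1) :
    quarticDiscAux b c d e = 0 := by
  have hpp : p.Prime := Fact.out
  by_cases p3 : p = 3
  · subst p3; exact quarticDiscAux_three b c d e hf
  by_cases p5 : p = 5
  · subst p5; exact quarticDiscAux_five b c d e hf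
  have p7 : 7 ≤ p := by
    by_contra hlt
    have := hpp.two_le
    interval_cases p <;> first | omega | (revert hpp; decide)
  have hne : ∀ n : ℕ, 0 < n → n < 7 → (n : ZMod p) ≠ 0 := by
    intro n h0 h7 h
    rw [ZMod.natCast_eq_zero_iff] at h
    have := Nat.le_of_dvd h0 h
    omega
  obtain ⟨m, hm⟩ : ∃ m, p = 2 * m + 1 := hpp.odd_of_ne_two hp
  have hm2 : p / 2 = m := by omega
  rw [hm2] at hf
  set f : (ZMod p)[X] := X ^ 4 + C b * X ^ 3 + C c * X ^ 2 + C d * X + C e with hfdef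
  have hfdeg : f.natDegree = 4 := by rw [hfdef]; compute_degree!
  have hfm : f.Monic := by rw [hfdef]; monicity!
  set P : (ZMod p)[X] := X ^ p - X with hP
  have hPdeg : P.natDegree = p := FiniteField.X_pow_card_sub_X_natDegree_eq _ hpp.one_lt
  have hPm : P.Monic := by
    apply monic_X_pow_sub
    rw [degree_X]
    exact_mod_cast hpp.one_lt
  have hP' : derivative P = -1 := by
    simp [hP, derivative_X_pow]
  -- `P` divides `f ^ m - 1`, because the remainder has degree below `p` and `p` roots.
  obtain ⟨g, hg⟩ : P ∣ f ^ m - 1 := by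
    rw [← modByMonic_eq_zero_iff_dvd hPm]
    apply eq_zero_of_natDegree_lt_card_of_eval_eq_zero _ (f := (id : ZMod p → ZMod p))
      Function.injective_id
    · intro x
      have hPx : eval x P = 0 := by simp [hP]
      have := congrArg (eval x) (modByMonic_add_div (f ^ m - 1) P)
      simp only [eval_add, eval_mul, hPx, zero_mul, add_zero] at this
      rw [id, this]
      have := hf x
      simp [hfdef, this]
    · rw [ZMod.card]
      conv_rhs => rw [← hPdeg]
      apply natDegree_modByMonic_lt _ hPm
      intro h
      rw [h] at hPdeg
      simp at hPdeg
      omega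
  have hfmm : (f ^ m).Monic := hfm.pow m
  have hfmdeg : (f ^ m).natDegree = 4 * m := by rw [hfm.natDegree_pow, hfdeg]; ring
  have hPg : (P * g).Monic := by
    rw [← hg]
    apply hfmm.sub_of_left
    apply degree_lt_degree
    rw [hfmdeg]
    simp; omega
  have hgm : g.Monic := hPm.of_mul_monic_left hPg
  have hgdeg : g.natDegree + 2 = p := by
    have h1 : (P * g).natDegree = 4 * m := by
      rw [← hg, ← C_1, natDegree_sub_C, hfmdeg]
    rw [hPm.natDegree_mul hgm, hPdeg] at h1
    omega
  have hpoly2m : (2 * (m : (ZMod p)[X]) + 1) = 0 := by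
    have : ((p : ℕ) : (ZMod p)[X]) = 0 := CharP.cast_eq_zero _ p
    have hm' := congrArg (Nat.cast : ℕ → (ZMod p)[X]) hm
    rw [this] at hm'
    push_cast at hm'
    exact hm'.symm
  set H : (ZMod p)[X] := 2 * f * derivative g + derivative f * g with hH
  have e0 : f ^ m = 1 + P * g := by rw [← hg]; ring
  have e1 : 2 * f * g - derivative f = P * H := by
    have h := congrArg derivative e0
    obtain ⟨k, rfl⟩ : ∃ k, m = k + 1 := ⟨m - 1, by omega⟩
    rw [derivative_pow_succ] at h
    simp only [derivative_add, derivative_one, derivative_mul, hP'] at h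
    simp only [map_add, map_one, map_natCast] at h
    push_cast at hpoly2m
    rw [hH]
    linear_combination (2 * f) * h - derivative f * f ^ (k + 1) * hpoly2m + derivative f * e0
  have e2 : 4 * f * H + derivative f ^ 2 - 2 * f * derivative (derivative f) =
      P * (2 * f * derivative H - derivative f * H) := by
    have h := congrArg derivative e1
    simp only [derivative_sub, derivative_mul, hP', derivative_ofNat] at h
    linear_combination (2 * f) * h - derivative f * e1 + 2 * f * hH
  have hHdeg : H.natDegree = 2 := by
    have h2 : (2 : ZMod p) ≠ 0 := by exact_mod_cast hne 2 (by norm_num) (by norm_num)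
    have hfg : (f * g).natDegree = p + 2 := by
      rw [hfm.natDegree_mul hgm, hfdeg]; omega
    have hd : (2 * f * g - derivative f).natDegree = p + 2 := by
      rw [mul_assoc, natDegree_sub_eq_left_of_natDegree_lt]
      · rw [← C_ofNat, natDegree_C_mul h2, hfg]
      · rw [← C_ofNat, natDegree_C_mul h2, hfg]
        have := natDegree_derivative_le f
        omega
    have hH0 : H ≠ 0 := by
      intro h
      rw [e1, h] at hd
      simp at hd
    rw [e1, hPm.natDegree_mul' hH0, hPdeg] at hd
    omega
  have hK : 2 * f * derivative H - derivative f * H = 0 := by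
    by_contra hK
    have h := congrArg natDegree e2
    rw [hPm.natDegree_mul' hK, hPdeg] at h
    have h4 : (4 * f * H + derivative f ^ 2 - 2 * f * derivative (derivative f)).natDegree ≤ 6 := by
      have d1 : (derivative f).natDegree ≤ 3 := by
        have := natDegree_derivative_le f
        omega
      have d2 : (derivative (derivative f)).natDegree ≤ 2 := by
        have := natDegree_derivative_le (derivative f)
        omega
      have hf4 := hfdeg.le
      have hH2 := hHdeg.le
      clear_value f H
      compute_degree
      all_goals first | assumption | omega
    omega
  exact quarticDiscAux_eq_zero_of_ode (by exact_mod_cast hne 2 (by norm_num) (by norm_num))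
    (by exact_mod_cast hne 3 (by norm_num) (by norm_num)) hHdeg (sub_eq_zero.mp hK)

/-- Hensel lifting of a simple root modulo `p` of an integer polynomial. -/
lemma exists_padic_root (p : ℕ) [Fact p.Prime] (F : ℤ[X]) (a : ℤ) (h0 : (p : ℤ) ∣ F.eval a)
    (h1 : ¬ (p : ℤ) ∣ (derivative F).eval a) :
    ∃ z : ℚ_[p], (F.map (Int.castRingHom ℚ_[p])).eval z = 0 := by
  have key : ∀ G : ℤ[X], aeval (a : ℤ_[p]) G = ((G.eval a : ℤ) : ℤ_[p]) := by
    intro G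
    have := aeval_algebraMap_apply ℤ_[p] a G
    simpa using this
  have hn : ‖aeval (a : ℤ_[p]) (derivative F)‖ = 1 := by
    rw [key]
    refine le_antisymm (PadicInt.norm_le_one _) (not_lt.mp ?_)
    rwa [PadicInt.norm_int_lt_one_iff_dvd]
  obtain ⟨z, hz, -⟩ := hensels_lemma (p := p) (F := F) (a := (a : ℤ_[p])) (by
    rw [hn, key, one_pow]
    exact (PadicInt.norm_int_lt_one_iff_dvd _).2 h0)
  refine ⟨(z : ℚ_[p]), ?_⟩
  have h := congrArg (PadicInt.Coe.ringHom : ℤ_[p] →+* ℚ_[p]) hz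
  rw [aeval_def, hom_eval₂, map_zero] at h
  rw [eval_map, ← h]
  congr 1

/-- Hensel lifting of a nonzero solution `y` of `A y² = B` modulo `p`, for `p` odd, `p ∤ A`. -/
lemma exists_padic_sqrt (p : ℕ) [Fact p.Prime] (hp : p ≠ 2) (A B y : ℤ)
    (h : (A : ZMod p) * y ^ 2 = B) (hA : (A : ZMod p) ≠ 0) (hy : (y : ZMod p) ≠ 0) :
    ∃ z : ℚ_[p], (A : ℚ_[p]) * z ^ 2 = B := by
  have h2 : (2 : ZMod p) ≠ 0 := by
    have hpp : p.Prime := Fact.out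
    intro h
    have h' : ((2 : ℕ) : ZMod p) = 0 := by exact_mod_cast h
    rw [ZMod.natCast_eq_zero_iff] at h'
    exact hp ((Nat.prime_dvd_prime_iff_eq hpp Nat.prime_two).1 h')
  obtain ⟨z, hz⟩ := exists_padic_root p (C A * X ^ 2 - C B) y
    (by
      rw [← ZMod.intCast_zmod_eq_zero_iff_dvd]
      simp [h])
    (by
      rw [← ZMod.intCast_zmod_eq_zero_iff_dvd]
      simp [hA, hy, h2])
  refine ⟨z, ?_⟩
  simpa [sub_eq_zero] using hz

/-- if `p ∤ 2·q·disc f` then `H_q` is locally solvable at `p`. -/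
theorem statement3 (f : Polynomial ℤ) (hmonic : f.Monic) (hirr : Irreducible f)
    (hdeg : f.natDegree = 4) (q : ℤ) (hq : q ≠ 0) (p : ℕ) [Fact p.Prime]
    (hp : ¬ (p : ℤ) ∣ 2 * q * quarticDisc f) :
    LocallySolvableAt f q p := by
  have hp2 : p ≠ 2 := by
    rintro rfl
    exact hp (Dvd.intro _ (mul_assoc _ _ _).symm)
  have hq0 : (q : ZMod p) ≠ 0 := by
    rw [Ne, ZMod.intCast_zmod_eq_zero_iff_dvd]
    exact fun h => hp ((h.mul_left 2).mul_right _)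
  have hD : quarticDiscAux (f.coeff 3 : ZMod p) (f.coeff 2) (f.coeff 1) (f.coeff 0) ≠ 0 := by
    intro h
    apply hp
    apply Dvd.dvd.mul_left
    rw [← ZMod.intCast_zmod_eq_zero_iff_dvd, ← h]
    simp only [quarticDisc, quarticDiscAux]
    push_cast
    rfl
  have hfX : f = X ^ 4 + C (f.coeff 3) * X ^ 3 + C (f.coeff 2) * X ^ 2 + C (f.coeff 1) * X
      + C (f.coeff 0) := by
    have h4 : f.coeff 4 = 1 := by rw [← hdeg]; exact hmonic
    conv_lhs => rw [f.as_sum_range_C_mul_X_pow, hdeg]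
    simp only [Finset.sum_range_succ, Finset.sum_range_zero, h4, C_1]
    ring
  set b := f.coeff 3
  set c := f.coeff 2
  set d := f.coeff 1
  set e := f.coeff 0
  have hev : ∀ a : ℤ, f.eval a = a ^ 4 + b * a ^ 3 + c * a ^ 2 + d * a + e := by
    intro a
    conv_lhs => rw [hfX]
    simp
  have hev' : ∀ a : ℤ, (derivative f).eval a = 4 * a ^ 3 + 3 * b * a ^ 2 + 2 * c * a + d := by
    intro a
    conv_lhs => rw [hfX]
    simp
    ring
  by_cases hroot : ∃ a : ℤ, ((f.eval a : ℤ) : ZMod p) = 0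
  · obtain ⟨a, ha⟩ := hroot
    obtain ⟨z, hz⟩ := exists_padic_root p f a ((ZMod.intCast_zmod_eq_zero_iff_dvd _ _).1 ha) (by
      rw [← ZMod.intCast_zmod_eq_zero_iff_dvd]
      intro h'
      rw [hev] at ha
      rw [hev'] at h'
      push_cast at ha h'
      exact hD (quarticDiscAux_eq_zero_of_double_root ha h'))
    exact Or.inl ⟨z, 0, by rw [hz]; ring⟩
  push Not at hroot
  by_cases hqs : IsSquare (q : ZMod p)
  · right
    obtain ⟨y, hy⟩ := hqs
    obtain ⟨y, rfl⟩ := ZMod.intCast_surjective y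
    obtain ⟨z, hz⟩ := exists_padic_sqrt p hp2 1 q y (by rw [hy]; push_cast; ring) (by simp)
      (by rintro h; simp [h] at hy; exact hq0 hy)
    exact ⟨z, by rw [← hz]; push_cast; ring⟩
  left
  obtain ⟨a, ha⟩ : ∃ a : ℤ, ¬ IsSquare ((f.eval a : ℤ) : ZMod p) := by
    by_contra! hall
    refine hD (quarticDiscAux_eq_zero p hp2 _ _ _ _ fun x => ?_)
    obtain ⟨a, rfl⟩ := ZMod.intCast_surjective x
    have := (ZMod.euler_criterion p (hroot a)).1 (hall a)
    rw [hev] at this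
    exact_mod_cast this
  -- A product of two non-squares of `𝔽_p` is a square.
  have hsq : IsSquare ((q : ZMod p) * ((f.eval a : ℤ) : ZMod p)) := by
    have h1 := ZMod.pow_div_two_eq_neg_one_or_one p hq0
    have h2 := ZMod.pow_div_two_eq_neg_one_or_one p (hroot a)
    rw [ZMod.euler_criterion p hq0] at hqs
    rw [ZMod.euler_criterion p (hroot a)] at ha
    rw [ZMod.euler_criterion p (mul_ne_zero hq0 (hroot a)), mul_pow,
      h1.resolve_left hqs, h2.resolve_left ha]
    norm_num
  obtain ⟨w, hw⟩ := hsq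
  obtain ⟨y, hy⟩ := ZMod.intCast_surjective (w / (q : ZMod p))
  obtain ⟨z, hz⟩ := exists_padic_sqrt p hp2 q (f.eval a) y
    (by
      rw [hy]
      field_simp
      rw [pow_two, ← hw])
    hq0
    (by
      rw [hy]
      refine div_ne_zero ?_ hq0
      rintro rfl
      exact mul_ne_zero hq0 (hroot a) (by rw [hw, mul_zero]))
  refine ⟨(a : ℚ_[p]), z, ?_⟩
  rw [hz]
  simp
end

section
/- Let p be an odd prime and let q and r be nonzero integers with the same p-adic valuation e, write q = p^e·q' and r = p^e·r' with p ∤ q'·r', and suppose the Legendre symbols (q'/p) and (r'/p) are equal. Then H_q is locally solvable at p if and only if H_r is locally solvable at p. -/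
/-!
The product `q * r = p ^ (2 * e) * (q' * r')` is a nonzero square in `ℚ_p`: since the Legendre
symbols of `q'` and `r'` agree, the `p`-adic unit `q' * r'` is a square modulo `p`, and hence a
square in `ℤ_p` by Hensel's lemma, as `p` is odd (`isSquare_padicInt_of_legendreSym`). So `q` and
`r` have the same class in `ℚ_pˣ / (ℚ_pˣ)²`, and rescaling `y` identifies the points of `H_q` and
`H_r` over `ℚ_p`, at infinity as well (`LocallySolvableAt.of_mul_eq_sq`).
-/

open Polynomial

lemma isSquare_padicInt_of_legendreSym (p : ℕ) [Fact p.Prime] (hp : p ≠ 2) (n : ℤ)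
    (hn : ¬ (p : ℤ) ∣ n) (h : legendreSym p n = 1) : ∃ z : ℤ_[p], z ^ 2 = n := by
  have hn0 : (n : ZMod p) ≠ 0 := by
    rwa [Ne, ZMod.intCast_zmod_eq_zero_iff_dvd]
  obtain ⟨c', hc'⟩ := (legendreSym.eq_one_iff p hn0).1 h
  obtain ⟨c, rfl⟩ := ZMod.intCast_surjective c'
  have hdvd : (p : ℤ) ∣ c ^ 2 - n := by
    rw [← ZMod.intCast_zmod_eq_zero_iff_dvd]
    push_cast
    rw [hc']
    ring
  have h2c : ¬ (p : ℤ) ∣ 2 * c := by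
    intro hd
    have hpp : Prime (p : ℤ) := Nat.prime_iff_prime_int.1 Fact.out
    rcases hpp.dvd_or_dvd hd with hd | hd
    · have : p ∣ 2 := by exact_mod_cast hd
      exact hp ((Nat.prime_dvd_prime_iff_eq Fact.out Nat.prime_two).1 this)
    · exact hn ((dvd_sub_right (dvd_pow hd two_ne_zero)).1 hdvd)
  have hder : ‖((2 * c : ℤ) : ℤ_[p])‖ = 1 :=
    le_antisymm (PadicInt.norm_le_one _)
      (not_lt.1 fun hlt => h2c ((PadicInt.norm_int_lt_one_iff_dvd _).1 hlt))
  have hval : ‖((c ^ 2 - n : ℤ) : ℤ_[p])‖ < 1 := (PadicInt.norm_int_lt_one_iff_dvd _).2 hdvd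
  push_cast at hder hval
  rw [norm_mul] at hder
  -- The root `c` of `X ^ 2 - n` modulo `p` is simple because `2 * c` is a `p`-adic unit.
  obtain ⟨z, hz, -⟩ := hensels_lemma (p := p) (F := (X ^ 2 - C (n : ℤ_[p]) : ℤ_[p][X]))
    (a := (c : ℤ_[p])) (by simpa [one_add_one_eq_two, hder] using hval)
  exact ⟨z, sub_eq_zero.1 (by simpa using hz)⟩

lemma LocallySolvableAt.of_mul_eq_sq {f : Polynomial ℤ} {p : ℕ} [Fact p.Prime] {q r : ℤ}
    (hq : q ≠ 0) (hr : r ≠ 0) {s : ℚ_[p]} (hs : (q : ℚ_[p]) * r = s ^ 2)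
    (h : LocallySolvableAt f q p) : LocallySolvableAt f r p := by
  have hq0 : (q : ℚ_[p]) ≠ 0 := by exact_mod_cast hq
  have hr0 : (r : ℚ_[p]) ≠ 0 := by exact_mod_cast hr
  rcases h with ⟨x, y, hxy⟩ | ⟨t, ht⟩
  · refine Or.inl ⟨x, q * y / s, ?_⟩
    rw [← hxy, div_pow, ← hs]
    field_simp
  · refine Or.inr ⟨s / t, ?_⟩
    rw [← sq, div_pow, ← hs, sq, ← ht]
    field_simp

/-- if `p` is an odd prime, `q = p^e·q'` and `r = p^e·r'` with
`p ∤ q'·r'` and `(q'/p) = (r'/p)`, then `H_q` is locally solvable at `p` iff `H_r` is. -/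
theorem statement6 (f : Polynomial ℤ) (hmonic : f.Monic) (hirr : Irreducible f)
    (hdeg : f.natDegree = 4) (p : ℕ) [Fact p.Prime] (hpodd : p ≠ 2)
    (q r : ℤ) (hq : q ≠ 0) (hr : r ≠ 0) (e : ℕ) (q' r' : ℤ)
    (hcop : ¬ (p : ℤ) ∣ q' * r') (hqe : q = (p : ℤ) ^ e * q') (hre : r = (p : ℤ) ^ e * r')
    (hleg : legendreSym p q' = legendreSym p r') :
    LocallySolvableAt f q p ↔ LocallySolvableAt f r p := by
  have hr'0 : (r' : ZMod p) ≠ 0 := by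
    rw [Ne, ZMod.intCast_zmod_eq_zero_iff_dvd]
    exact fun hd => hcop (hd.mul_left q')
  obtain ⟨z, hz⟩ := isSquare_padicInt_of_legendreSym p hpodd (q' * r') hcop (by
    rw [legendreSym.mul, hleg, ← sq]
    exact legendreSym.sq_one p hr'0)
  have hz' : (z : ℚ_[p]) ^ 2 = q' * r' := by
    have := congrArg (fun w : ℤ_[p] => (w : ℚ_[p])) hz
    push_cast at this
    exact this
  have hs : (q : ℚ_[p]) * r = ((p : ℚ_[p]) ^ e * z) ^ 2 := by
    rw [mul_pow, hz', hqe, hre]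
    push_cast
    ring
  exact ⟨.of_mul_eq_sq hq hr hs, .of_mul_eq_sq hr hq (by rw [mul_comm, hs])⟩
end

section
/- Suppose the Galois group of f over ℚ has order 4 (i.e., it is isomorphic to ℤ/2ℤ × ℤ/2ℤ or to ℤ/4ℤ). Then for every prime p with p ∤ disc(f): if the reduction of f modulo p has a root in 𝔽_p, then f modulo p splits as a product of four linear factors in 𝔽_p[x]. -/
/-!
Let `L` be the splitting field of `f` over `ℚ` and `a₀, …, a₃` the roots of `f` in `𝓞 L`. As
`[L : ℚ] = 4 = deg f`, each root generates `L`, so an automorphism fixing a single root is the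
identity (`eq_one_of_fixes_root`).

Choose a prime `Q` of `𝓞 L` above `p`, and let `σ` be a Frobenius element at `Q`, so that
`σ x ≡ x ^ p` modulo `Q`. If `n` is an integer with `p ∣ f(n) = ∏ (n - aᵢ)`, then `aᵢ ≡ n` modulo
`Q` for some `i`, and therefore `σ aᵢ ≡ n ^ p ≡ n ≡ aᵢ`. Now `σ aᵢ` is again a root of `f`, and two
distinct roots cannot be congruent modulo `Q`, because their difference divides `disc f`, which is
prime to `p` (`sub_dvd_quarticDisc`). Hence `σ` fixes `aᵢ`, so `σ = 1` and `x ^ p ≡ x` modulo `Q`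
for every `x` in `𝓞 L`. Thus each `aⱼ` reduces into the prime field of `𝓞 L ⧸ Q`, that is, `f`
splits over `𝔽_p`.
-/

open Polynomial

/-- The Galois group of `f` over `ℚ` (the Galois group of its splitting field). -/
noncomputable abbrev galF (f : Polynomial ℤ) := (f.map (Int.castRingHom ℚ)).Gal

/-- The difference of two distinctly indexed roots divides the discriminant, since the latter is
the product of the squares of all these differences. -/
lemma sub_dvd_quarticDisc {R : Type*} [CommRing R] (f : ℤ[X]) (a : Fin 4 → R)
    (h : f.map (Int.castRingHom R) = ∏ i, (X - C (a i))) {i j : Fin 4} (hij : i ≠ j) :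
    a i - a j ∣ (quarticDisc f : R) := by
  -- Vieta's formulas for the four lower coefficients.
  have hexp : ∏ i, (X - C (a i)) =
      X ^ 4 + C (-(a 0 + a 1 + a 2 + a 3)) * X ^ 3
        + C (a 0 * a 1 + a 0 * a 2 + a 0 * a 3 + a 1 * a 2 + a 1 * a 3 + a 2 * a 3) * X ^ 2
        + C (-(a 0 * a 1 * a 2 + a 0 * a 1 * a 3 + a 0 * a 2 * a 3 + a 1 * a 2 * a 3)) * X
        + C (a 0 * a 1 * a 2 * a 3) := by
    simp only [Fin.prod_univ_four, map_neg, map_add, map_mul]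
    ring
  rw [hexp] at h
  have h0 : (f.coeff 0 : R) = a 0 * a 1 * a 2 * a 3 := by
    simpa [coeff_X, coeff_C, coeff_X_pow] using congrArg (coeff · 0) h
  have h1 : (f.coeff 1 : R) =
      -(a 0 * a 1 * a 2 + a 0 * a 1 * a 3 + a 0 * a 2 * a 3 + a 1 * a 2 * a 3) := by
    have := congrArg (coeff · 1) h
    simp only [coeff_map, coeff_add, coeff_C_mul, coeff_X_pow, coeff_X, coeff_C] at this
    simpa using this
  have h2 : (f.coeff 2 : R) =
      a 0 * a 1 + a 0 * a 2 + a 0 * a 3 + a 1 * a 2 + a 1 * a 3 + a 2 * a 3 := by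
    have := congrArg (coeff · 2) h
    simp only [coeff_map, coeff_add, coeff_C_mul, coeff_X_pow, coeff_X, coeff_C] at this
    simpa using this
  have h3 : (f.coeff 3 : R) = -(a 0 + a 1 + a 2 + a 3) := by
    have := congrArg (coeff · 3) h
    simp only [coeff_map, coeff_add, coeff_C_mul, coeff_X_pow, coeff_X, coeff_C] at this
    simpa using this
  have key : (quarticDisc f : R) = ((a 0 - a 1) * (a 0 - a 2) * (a 0 - a 3) * (a 1 - a 2) *
      (a 1 - a 3) * (a 2 - a 3)) ^ 2 := by
    simp only [quarticDisc]
    push_cast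
    rw [h0, h1, h2, h3]
    ring
  rw [key]
  refine Dvd.dvd.trans ?_ (dvd_pow_self _ two_ne_zero)
  have d01 : a 0 - a 1 ∣ (a 0 - a 1) * (a 0 - a 2) * (a 0 - a 3) * (a 1 - a 2) *
      (a 1 - a 3) * (a 2 - a 3) := ⟨(a 0 - a 2) * (a 0 - a 3) * (a 1 - a 2) *
      (a 1 - a 3) * (a 2 - a 3), by ring⟩
  have d02 : a 0 - a 2 ∣ (a 0 - a 1) * (a 0 - a 2) * (a 0 - a 3) * (a 1 - a 2) *
      (a 1 - a 3) * (a 2 - a 3) := ⟨(a 0 - a 1) * (a 0 - a 3) * (a 1 - a 2) *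
      (a 1 - a 3) * (a 2 - a 3), by ring⟩
  have d03 : a 0 - a 3 ∣ (a 0 - a 1) * (a 0 - a 2) * (a 0 - a 3) * (a 1 - a 2) *
      (a 1 - a 3) * (a 2 - a 3) := ⟨(a 0 - a 1) * (a 0 - a 2) * (a 1 - a 2) *
      (a 1 - a 3) * (a 2 - a 3), by ring⟩
  have d12 : a 1 - a 2 ∣ (a 0 - a 1) * (a 0 - a 2) * (a 0 - a 3) * (a 1 - a 2) *
      (a 1 - a 3) * (a 2 - a 3) := ⟨(a 0 - a 1) * (a 0 - a 2) * (a 0 - a 3) *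
      (a 1 - a 3) * (a 2 - a 3), by ring⟩
  have d13 : a 1 - a 3 ∣ (a 0 - a 1) * (a 0 - a 2) * (a 0 - a 3) * (a 1 - a 2) *
      (a 1 - a 3) * (a 2 - a 3) := ⟨(a 0 - a 1) * (a 0 - a 2) * (a 0 - a 3) *
      (a 1 - a 2) * (a 2 - a 3), by ring⟩
  have d23 : a 2 - a 3 ∣ (a 0 - a 1) * (a 0 - a 2) * (a 0 - a 3) * (a 1 - a 2) *
      (a 1 - a 3) * (a 2 - a 3) := Dvd.intro_left _ rfl
  have hsymm (k l : Fin 4) {x : R} (hx : a k - a l ∣ x) : a l - a k ∣ x := by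
    rwa [← neg_sub, neg_dvd]
  fin_cases i <;> fin_cases j <;>
    first
    | exact absurd rfl hij
    | assumption
    | exact hsymm _ _ (by assumption)

/-- The roots of `f` in a number field where it splits are algebraic integers, so `f` already
factors over the ring of integers. -/
lemma exists_factorization {L : Type*} [Field L] [NumberField L] (f : ℤ[X]) (hmonic : f.Monic)
    (hdeg : f.natDegree = 4) (hsplit : (f.map (Int.castRingHom L)).Splits) :
    ∃ a : Fin 4 → NumberField.RingOfIntegers L,
      f.map (Int.castRingHom (NumberField.RingOfIntegers L)) = ∏ i, (X - C (a i)) := by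
  have hm : (f.map (Int.castRingHom L)).Monic := hmonic.map _
  have hcard : (f.map (Int.castRingHom L)).roots.card = 4 := by
    rw [← hsplit.natDegree_eq_card_roots, hmonic.natDegree_map, hdeg]
  obtain ⟨x, y, z, w, hr⟩ := Multiset.card_eq_four.mp hcard
  have hprod : f.map (Int.castRingHom L) = ∏ i, (X - C ((![x, y, z, w] : Fin 4 → L) i)) := by
    rw [hsplit.eq_prod_roots_of_monic hm, hr]
    simp [Fin.prod_univ_four, mul_assoc]
  have hint (i : Fin 4) : IsIntegral ℤ ((![x, y, z, w] : Fin 4 → L) i) := by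
    refine ⟨f, hmonic, ?_⟩
    rw [← eval_map, algebraMap_int_eq, hprod, eval_prod]
    exact Finset.prod_eq_zero (Finset.mem_univ i) (by simp)
  have hlift (i : Fin 4) : ∃ b : NumberField.RingOfIntegers L,
      algebraMap (NumberField.RingOfIntegers L) L b = (![x, y, z, w] : Fin 4 → L) i :=
    IsIntegralClosure.isIntegral_iff.mp (hint i)
  choose b hb using hlift
  refine ⟨b, ?_⟩
  apply Polynomial.map_injective (algebraMap (NumberField.RingOfIntegers L) L)
    NumberField.RingOfIntegers.coe_injective
  rw [Polynomial.map_map, Subsingleton.elim (RingHom.comp _ _) (Int.castRingHom L), hprod,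
    Polynomial.map_prod]
  simp only [Polynomial.map_sub, map_X, map_C, hb]

/-- If `[L : ℚ] = deg f`, a root of the irreducible polynomial `f` is a primitive element of `L`. -/
lemma eq_one_of_fixes_root {L : Type*} [Field L] [NumberField L] (f : ℤ[X]) (hmonic : f.Monic)
    (hirr : Irreducible f) (hL : Module.finrank ℚ L = f.natDegree) (x : L)
    (hx : (f.map (Int.castRingHom L)).eval x = 0) (σ : L ≃ₐ[ℚ] L) (hσ : σ x = x) : σ = 1 := by
  have hirrQ : Irreducible (f.map (Int.castRingHom ℚ)) :=
    (hmonic.irreducible_iff_irreducible_map_fraction_map (K := ℚ)).mp hirr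
  have hmin : minpoly ℚ x = f.map (Int.castRingHom ℚ) := by
    refine (minpoly.eq_of_irreducible_of_monic hirrQ ?_ (hmonic.map _)).symm
    rw [aeval_def, ← eval_map, Polynomial.map_map,
      Subsingleton.elim (RingHom.comp _ _) (Int.castRingHom L), hx]
  have htop : IntermediateField.adjoin ℚ {x} = ⊤ := by
    apply (Field.primitive_element_iff_minpoly_natDegree_eq ℚ x).mpr
    rw [hmin, hmonic.natDegree_map, hL]
  ext y
  have hy : y ∈ IntermediateField.adjoin ℚ {x} := htop ▸ IntermediateField.mem_top
  change σ y = y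
  induction hy using IntermediateField.adjoin_induction with
  | mem z hz => rw [Set.mem_singleton_iff.mp hz, hσ]
  | algebraMap q => exact σ.commutes q
  | add z w _ _ hz hw => rw [map_add, hz, hw]
  | inv z _ hz => rw [map_inv₀, hz]
  | mul z w _ _ hz hw => rw [map_mul, hz, hw]

/-- The theorem over a number field of degree `4`, Galois over `ℚ`, in which `f` splits. -/
lemma splits_mod_of_root {L : Type*} [Field L] [NumberField L] [IsGalois ℚ L] (f : ℤ[X])
    (hmonic : f.Monic) (hirr : Irreducible f) (hdeg : f.natDegree = 4)
    (hL : Module.finrank ℚ L = 4) (hsplit : (f.map (Int.castRingHom L)).Splits)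
    (p : ℕ) [hp : Fact p.Prime] (hpd : ¬ (p : ℤ) ∣ quarticDisc f) (n : ℤ)
    (hn : (p : ℤ) ∣ f.eval n) :
    ∃ r : Fin 4 → ZMod p, f.map (Int.castRingHom (ZMod p)) = ∏ i, (X - C (r i)) := by
  obtain ⟨a, ha⟩ := exists_factorization f hmonic hdeg hsplit
  have hpmax : (Ideal.span {(p : ℤ)}).IsMaximal :=
    PrincipalIdealRing.isMaximal_of_irreducible (Nat.prime_iff_prime_int.mp hp.out).irreducible
  obtain ⟨Q, hQ, hQp⟩ := Ideal.exists_maximal_ideal_liesOver_of_isIntegral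
    (S := NumberField.RingOfIntegers L) (Ideal.span {(p : ℤ)})
  have hmem (m : ℤ) : (m : NumberField.RingOfIntegers L) ∈ Q ↔ (p : ℤ) ∣ m := by
    rw [← Ideal.mem_span_singleton, hQp.over, Ideal.mem_under]
    simp
  -- Congruent roots coincide, as their difference divides the discriminant.
  have hdist (i j : Fin 4) (h : a i - a j ∈ Q) : i = j := by
    by_contra hij
    exact hpd ((hmem _).mp (Q.mem_of_dvd (sub_dvd_quarticDisc f a ha hij) h))
  obtain ⟨i, hi⟩ : ∃ i, (n : NumberField.RingOfIntegers L) - a i ∈ Q := by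
    have h1 : ((f.eval n : ℤ) : NumberField.RingOfIntegers L) = ∏ i, ((n : _) - a i) := by
      have := congrArg (eval (n : NumberField.RingOfIntegers L)) ha
      simpa [eval_prod, eval_intCast_map] using this
    have h2 := (hmem _).mpr hn
    rw [h1, hQ.isPrime.prod_mem_iff] at h2
    simpa using h2
  obtain ⟨σ, hσ⟩ := IsArithFrobAt.exists_of_isInvariant ℤ (L ≃ₐ[ℚ] L) Q
  have hcardp : Nat.card (ℤ ⧸ Q.under ℤ) = p := by
    rw [← hQp.over]
    simpa using Int.card_ideal_quot p
  have hfrob (x : NumberField.RingOfIntegers L) : σ • x - x ^ p ∈ Q := by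
    simpa [hcardp] using hσ x
  have hroot (x : NumberField.RingOfIntegers L) :
      (f.map (Int.castRingHom (NumberField.RingOfIntegers L))).eval x = 0 ↔ ∃ j, x = a j := by
    rw [ha, eval_prod]
    simp [Finset.prod_eq_zero_iff, sub_eq_zero]
  obtain ⟨j, hj⟩ : ∃ j, σ • a i = a j := by
    rw [← hroot, eval_map]
    have h1 := (hroot (a i)).mpr ⟨i, rfl⟩
    have h2 := hom_eval₂ f (Int.castRingHom (NumberField.RingOfIntegers L))
      (MulSemiringAction.toRingHom (L ≃ₐ[ℚ] L) _ σ) (a i)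
    rw [← eval_map, h1, map_zero, Subsingleton.elim (RingHom.comp _ _) (Int.castRingHom _)] at h2
    exact h2.symm
  have hfix : σ • a i = a i := by
    have hflt : (n : NumberField.RingOfIntegers L) ^ p - n ∈ Q := by
      have : (p : ℤ) ∣ n ^ p - n := by
        rw [← ZMod.intCast_zmod_eq_zero_iff_dvd]
        simp
      simpa using (hmem _).mpr this
    have hpow : (n : NumberField.RingOfIntegers L) ^ p - a i ^ p ∈ Q :=
      Q.mem_of_dvd (sub_dvd_pow_sub_pow _ _ p) hi
    have hcong : a j - a i ∈ Q := by
      have h1 := hfrob (a i)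
      rw [hj] at h1
      have := Q.add_mem (Q.sub_mem (Q.add_mem h1 hi) hpow) hflt
      convert this using 1
      ring
    rw [hj, hdist j i hcong]
  have hσ1 : σ = 1 := by
    refine eq_one_of_fixes_root f hmonic hirr (by rw [hL, hdeg]) (a i : L) ?_ σ ?_
    · have h1 := (hroot (a i)).mpr ⟨i, rfl⟩
      have h2 := hom_eval₂ f (Int.castRingHom (NumberField.RingOfIntegers L))
        (algebraMap (NumberField.RingOfIntegers L) L) (a i)
      rw [← eval_map, h1, map_zero, Subsingleton.elim (RingHom.comp _ _) (Int.castRingHom L)] at h2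
      rw [eval_map]
      exact h2.symm
    · exact congrArg (fun x : NumberField.RingOfIntegers L ↦ (x : L)) hfix
  let _ : Field (NumberField.RingOfIntegers L ⧸ Q) := Ideal.Quotient.field Q
  let φ := Ideal.Quotient.mk Q
  have hchar : CharP (NumberField.RingOfIntegers L ⧸ Q) p := by
    refine ⟨fun m ↦ ?_⟩
    rw [← map_natCast φ, Ideal.Quotient.eq_zero_iff_mem, ← Int.natCast_dvd_natCast, ← hmem]
    simp
  have hred (j : Fin 4) : ∃ r : ZMod p, ZMod.castHom dvd_rfl _ r = φ (a j) := by
    have h1 : φ (a j) ^ p = φ (a j) := by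
      rw [← map_pow, eq_comm, Ideal.Quotient.eq]
      simpa [hσ1] using hfrob (a j)
    rw [← Subfield.mem_bot_iff_pow_eq_self, ← ZMod.fieldRange_castHom_eq_bot p] at h1
    exact h1
  choose r hr using hred
  refine ⟨r, Polynomial.map_injective _
    (ZMod.castHom dvd_rfl (NumberField.RingOfIntegers L ⧸ Q)).injective ?_⟩
  have := congrArg (Polynomial.map φ) ha
  rw [Polynomial.map_map, Subsingleton.elim (RingHom.comp _ _) (Int.castRingHom _)] at this
  rw [Polynomial.map_map, Subsingleton.elim (RingHom.comp _ _) (Int.castRingHom _), this]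
  simp only [Polynomial.map_prod, Polynomial.map_sub, map_X, map_C, hr]

/-- if the Galois group of `f` has order 4 and `p ∤ disc f`, then a single
root of `f` mod `p` forces `f` mod `p` to split into four linear factors. -/
theorem statement12 (f : Polynomial ℤ) (hmonic : f.Monic) (hirr : Irreducible f)
    (hdeg : f.natDegree = 4) (hGal : Nat.card (galF f) = 4)
    (p : ℕ) (hp : p.Prime) (hpd : ¬ (p : ℤ) ∣ quarticDisc f)
    (hroot : ∃ x₀ : ZMod p, (f.map (Int.castRingHom (ZMod p))).eval x₀ = 0) :
    ∃ a b c d : ZMod p, f.map (Int.castRingHom (ZMod p)) =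
      (X - C a) * (X - C b) * (X - C c) * (X - C d) := by
  have : Fact p.Prime := ⟨hp⟩
  obtain ⟨x₀, hx₀⟩ := hroot
  obtain ⟨n, rfl⟩ := ZMod.intCast_surjective x₀
  have hn : (p : ℤ) ∣ f.eval n := by
    rw [← ZMod.intCast_zmod_eq_zero_iff_dvd]
    simpa [eval_intCast_map] using hx₀
  have hirrQ : Irreducible (f.map (Int.castRingHom ℚ)) :=
    (hmonic.irreducible_iff_irreducible_map_fraction_map (K := ℚ)).mp hirr
  have hfin : Module.finrank ℚ (f.map (Int.castRingHom ℚ)).SplittingField = 4 := by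
    rw [← Gal.card_of_separable hirrQ.separable, hGal]
  have : NumberField (f.map (Int.castRingHom ℚ)).SplittingField :=
    { to_charZero := algebraRat.charZero _
      to_finiteDimensional := inferInstance }
  -- Instance search finds the `ℚ`-algebra structure coming from characteristic zero, while the
  -- library's splitting-field instance uses the one built into `SplittingField`; the two agree
  -- because a `ℚ`-algebra structure on a ring is unique.
  have : IsSplittingField ℚ (f.map (Int.castRingHom ℚ)).SplittingField
      (f.map (Int.castRingHom ℚ)) := by
    convert! IsSplittingField.splittingField (f.map (Int.castRingHom ℚ))
  have : IsGalois ℚ (f.map (Int.castRingHom ℚ)).SplittingField :=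
    IsGalois.of_separable_splitting_field hirrQ.separable
  have hsplit := SplittingField.splits (f.map (Int.castRingHom ℚ))
  rw [Polynomial.map_map, Subsingleton.elim (RingHom.comp _ _) (Int.castRingHom _)] at hsplit
  obtain ⟨r, hr⟩ := splits_mod_of_root f hmonic hirr hdeg hfin hsplit p hpd n hn
  exact ⟨r 0, r 1, r 2, r 3, by rw [hr, Fin.prod_univ_four]⟩
end

section
/- Suppose the Galois group of f over ℚ is isomorphic to the alternating group A₄. Then for every prime p with p ∤ disc(f): (i) the reduction of f modulo p is reducible in 𝔽_p[x], and (ii) if a monic irreducible quadratic g ∈ 𝔽_p[x] divides f modulo p, then the quotient (f mod p)/g is also an irreducible quadratic in 𝔽_p[x]. In particular, f modulo p has factorization type (1,1,1,1), (2,2), or (1,3), and never (1,1,2) or (4). -/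
open Polynomial

/-!
Let `K` be the splitting field of `f` over `ℚ`, `Q` a prime of `𝓞 K` above `p`, and
`σ ∈ Gal(K/ℚ)` a Frobenius element at `Q`, so that `σ x ≡ x ^ p` modulo `Q`. Two consequences of its
existence (`exists_frobenius`) carry the proof.

* If `σ ^ n = 1`, then every root of `f` in `𝓞 K / Q` is fixed by the `n`-th power of the Frobenius
  `x ↦ x ^ p`, so the degree of every irreducible factor of `f` modulo `p` divides `n`.
* The discriminant is the square of the product of the differences of the roots of `f`
  (`quarticDisc_eq_prod_sq`), so `p ∤ disc f` makes these roots distinct modulo `Q`. Hence a root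
  of `f` modulo `p` in `𝔽_p` comes from a root of `f` in `K` which is fixed by `σ`.

Elements of `A₄` have order `1`, `2` or `3`, none of which is a multiple of `4`, so `f` modulo `p`
is reducible. Now let `g` be an irreducible quadratic factor with complementary factor `h`. If `h`
is reducible, it has a root in `𝔽_p`, so `σ` fixes a root `x` of `f`. As `[ℚ(x) : ℚ] = 4` and
`|A₄| = 12`, the stabilizer of `x` has order `3`, so `σ ^ 3 = 1`
(`pow_three_eq_one_of_fixes_root`), and the first consequence gives `2 ∣ 3`, a contradiction.
-/

section

open scoped NumberField

theorem quarticDisc_eq_prod_sq {S : Type*} [CommRing S] (f : ℤ[X]) (a b c d : S)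
    (h : f.map (algebraMap ℤ S) = (X - C a) * (X - C b) * (X - C c) * (X - C d)) :
    ((quarticDisc f : ℤ) : S) =
      ((a - b) * (a - c) * (a - d) * (b - c) * (b - d) * (c - d)) ^ 2 := by
  have h2 : (X - C a) * (X - C b) * (X - C c) * (X - C d) =
      X ^ 4 + (C (-(a + b + c + d)) * X ^ 3 +
        C (a * b + a * c + a * d + b * c + b * d + c * d) * X ^ 2 +
        C (-(a * b * c + a * b * d + a * c * d + b * c * d)) * X + C (a * b * c * d)) := by
    simp only [map_add, map_mul, map_neg]; ring
  rw [h2] at h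
  have k3 : ((f.coeff 3 : ℤ) : S) = -(a + b + c + d) := by
    have := congrArg (coeff · 3) h
    simpa only [coeff_map, coeff_add, coeff_C_mul, coeff_X_pow, coeff_X, coeff_C,
      algebraMap_int_eq, eq_intCast, Nat.reduceEqDiff, if_true, if_false, mul_one, mul_zero,
      add_zero, zero_add, OfNat.ofNat_ne_zero, OfNat.ofNat_ne_one, OfNat.one_ne_ofNat] using this
  have k2 : ((f.coeff 2 : ℤ) : S) = a * b + a * c + a * d + b * c + b * d + c * d := by
    have := congrArg (coeff · 2) h
    simpa only [coeff_map, coeff_add, coeff_C_mul, coeff_X_pow, coeff_X, coeff_C,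
      algebraMap_int_eq, eq_intCast, Nat.reduceEqDiff, if_true, if_false, mul_one, mul_zero,
      add_zero, zero_add, OfNat.ofNat_ne_zero, OfNat.ofNat_ne_one, OfNat.one_ne_ofNat] using this
  have k1 : ((f.coeff 1 : ℤ) : S) = -(a * b * c + a * b * d + a * c * d + b * c * d) := by
    have := congrArg (coeff · 1) h
    simpa only [coeff_map, coeff_add, coeff_C_mul, coeff_X_pow, coeff_X, coeff_C,
      algebraMap_int_eq, eq_intCast, Nat.reduceEqDiff, if_true, if_false, mul_one, mul_zero,
      add_zero, zero_add, OfNat.ofNat_ne_zero, OfNat.ofNat_ne_one, OfNat.one_ne_ofNat,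
      one_ne_zero] using this
  have k0 : ((f.coeff 0 : ℤ) : S) = a * b * c * d := by
    have := congrArg (coeff · 0) h
    simpa only [coeff_map, coeff_add, coeff_C_mul, coeff_X_pow, coeff_X, coeff_C,
      algebraMap_int_eq, eq_intCast, Nat.reduceEqDiff, if_true, if_false, mul_one, mul_zero,
      add_zero, zero_add, OfNat.ofNat_ne_zero, OfNat.ofNat_ne_one, OfNat.one_ne_ofNat,
      OfNat.zero_ne_ofNat, one_ne_zero, zero_ne_one] using this
  simp only [quarticDisc]
  push_cast
  rw [k0, k1, k2, k3]
  ring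

theorem exists_ringOfIntegers_factorization (f : ℤ[X]) (hmonic : f.Monic)
    (hdeg : f.natDegree = 4) (K : Type*) [Field K] [NumberField K]
    (hs : (f.map (algebraMap ℤ K)).Splits) :
    ∃ a b c d : 𝓞 K,
      f.map (algebraMap ℤ (𝓞 K)) = (X - C a) * (X - C b) * (X - C c) * (X - C d) := by
  have hm := hmonic.map (algebraMap ℤ K)
  have hcard : (f.map (algebraMap ℤ K)).roots.card = 4 := by
    rw [← hs.natDegree_eq_card_roots, hmonic.natDegree_map, hdeg]
  obtain ⟨x, y, z, w, hr⟩ := Multiset.card_eq_four.1 hcard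
  have hprod := hs.eq_prod_roots_of_monic hm
  have hint : ∀ t ∈ (f.map (algebraMap ℤ K)).roots, IsIntegral ℤ t := by
    intro t ht
    refine ⟨f, hmonic, ?_⟩
    rw [mem_roots hm.ne_zero, IsRoot.def, eval_map] at ht
    exact ht
  have lift : ∀ t ∈ (f.map (algebraMap ℤ K)).roots, ∃ s : 𝓞 K, algebraMap (𝓞 K) K s = t :=
    fun t ht => ⟨⟨t, hint t ht⟩, rfl⟩
  rw [hr] at lift hprod
  obtain ⟨a, rfl⟩ := lift x (by simp)
  obtain ⟨b, rfl⟩ := lift y (by simp)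
  obtain ⟨c, rfl⟩ := lift z (by simp)
  obtain ⟨d, rfl⟩ := lift w (by simp)
  refine ⟨a, b, c, d, ?_⟩
  apply map_injective (algebraMap (𝓞 K) K) (FaithfulSMul.algebraMap_injective (𝓞 K) K)
  rw [map_map, ← IsScalarTower.algebraMap_eq, hprod]
  simp [mul_assoc]

/-- If `F` splits in `k` and all its roots there lie in the subfield of `p ^ n` elements, cut out by
`x ^ p ^ n = x`, then the degree of every irreducible factor of `F` divides `n`. -/
theorem natDegree_dvd_of_roots_pow_eq {p : ℕ} [Fact p.Prime] {k : Type*} [Field k]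
    [Algebra (ZMod p) k] {F h : (ZMod p)[X]} (hF : F ≠ 0)
    (hs : (F.map (algebraMap (ZMod p) k)).Splits) {n : ℕ}
    (hn : ∀ x : k, aeval x F = 0 → x ^ p ^ n = x) (hi : Irreducible h) (hd : h ∣ F) :
    h.natDegree ∣ n := by
  apply hi.natDegree_dvd_of_dvd_X_pow_card_pow_sub_X
  have hs' : (h.map (algebraMap (ZMod p) k)).Splits :=
    hs.of_dvd ((Polynomial.map_ne_zero_iff (algebraMap (ZMod p) k).injective).2 hF)
      (Polynomial.map_dvd _ hd)
  obtain ⟨x, hx⟩ := hs'.exists_eval_eq_zero (by rw [degree_map]; exact hi.degree_pos.ne')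
  rw [eval_map_algebraMap] at hx
  have hxF : aeval x F = 0 := aeval_eq_zero_of_dvd_aeval_eq_zero hd hx
  have hassoc := minpoly.eq_of_irreducible hi hx
  have : minpoly (ZMod p) x ∣ X ^ Nat.card (ZMod p) ^ n - X := by
    apply minpoly.dvd
    simp [hn x hxF]
  rw [← hassoc] at this
  exact dvd_of_mul_right_dvd this

/-- A Frobenius element `σ` at a prime above `p` controls the factorization of `f` modulo `p`: the
degrees of the irreducible factors divide every exponent that kills `σ`, and a root in `𝔽_p` yields
a root of `f` fixed by `σ`. -/
theorem exists_frobenius (f : ℤ[X]) (hmonic : f.Monic) (hdeg : f.natDegree = 4)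
    (p : ℕ) [Fact p.Prime] (hpd : ¬ (p : ℤ) ∣ quarticDisc f)
    (K : Type*) [Field K] [NumberField K] [IsGalois ℚ K]
    (hs : (f.map (algebraMap ℤ K)).Splits) :
    ∃ σ : Gal(K/ℚ),
      (∀ n, σ ^ n = 1 → ∀ h : (ZMod p)[X], Irreducible h →
        h ∣ f.map (Int.castRingHom (ZMod p)) → h.natDegree ∣ n) ∧
      ((∃ r, (f.map (Int.castRingHom (ZMod p))).IsRoot r) →
        ∃ x : K, aeval x f = 0 ∧ σ x = x) := by
  have hp : p.Prime := Fact.out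
  have hp' : Prime (p : ℤ) := Nat.prime_iff_prime_int.1 hp
  obtain ⟨a, b, c, d, hf⟩ := exists_ringOfIntegers_factorization f hmonic hdeg K hs
  have : (Ideal.span {(p : ℤ)}).IsMaximal :=
    PrincipalIdealRing.isMaximal_of_irreducible hp'.irreducible
  obtain ⟨Q, hQ, hQp⟩ :=
    Ideal.exists_maximal_ideal_liesOver_of_isIntegral (S := 𝓞 K) (Ideal.span {(p : ℤ)})
  have hover : Q.under ℤ = Ideal.span {(p : ℤ)} := hQp.over.symm
  have hmem : ∀ m : ℤ, (m : 𝓞 K) ∈ Q ↔ (p : ℤ) ∣ m := by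
    intro m
    rw [← Ideal.mem_span_singleton, ← hover, Ideal.mem_comap]
    simp
  have hQ0 : Q ≠ ⊥ := by
    rintro rfl
    have := (hmem p).2 dvd_rfl
    simp [hp.ne_zero] at this
  have : Finite (𝓞 K ⧸ Q) := Ideal.finiteQuotientOfFreeOfNeBot Q hQ0
  obtain ⟨σ, hσ⟩ := IsArithFrobAt.exists_of_isInvariant ℤ Gal(K/ℚ) Q
  have hfrob : ∀ x : 𝓞 K, Ideal.Quotient.mk Q (σ • x) = Ideal.Quotient.mk Q x ^ p := by
    intro x
    have := AlgHom.IsArithFrobAt.mk_apply hσ x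
    rwa [hover, Int.card_ideal_quot] at this
  have hfrobn : ∀ (n : ℕ) (x : 𝓞 K),
      Ideal.Quotient.mk Q (σ ^ n • x) = Ideal.Quotient.mk Q x ^ p ^ n := by
    intro n
    induction n with
    | zero => simp
    | succ n ih => intro x; rw [pow_succ', mul_smul, hfrob, ih, ← pow_mul, pow_succ]
  let _ : Field (𝓞 K ⧸ Q) := Ideal.Quotient.field Q
  have : CharP (𝓞 K ⧸ Q) p := by
    refine ⟨fun m => ?_⟩
    rw [← Int.natCast_dvd_natCast, ← hmem, ← Ideal.Quotient.eq_zero_iff_mem]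
    simp
  let _ : Algebra (ZMod p) (𝓞 K ⧸ Q) := ZMod.algebra _ p
  have hcomp : (algebraMap (ZMod p) (𝓞 K ⧸ Q)).comp (Int.castRingHom (ZMod p)) =
      (Ideal.Quotient.mk Q).comp (algebraMap ℤ (𝓞 K)) := RingHom.ext_int _ _
  have hmap : (f.map (Int.castRingHom (ZMod p))).map (algebraMap (ZMod p) (𝓞 K ⧸ Q)) =
      (f.map (algebraMap ℤ (𝓞 K))).map (Ideal.Quotient.mk Q) := by
    rw [map_map, map_map, hcomp]
  have hdisc : ((a - b) * (a - c) * (a - d) * (b - c) * (b - d) * (c - d)) ^ 2 ∉ Q := by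
    rw [← quarticDisc_eq_prod_sq f a b c d hf, hmem]
    exact hpd
  -- every root of `f` modulo `Q` lifts to a root of `f` in `𝓞 K`
  have hroot : ∀ x : 𝓞 K ⧸ Q, aeval x (f.map (Int.castRingHom (ZMod p))) = 0 →
      ∃ y : 𝓞 K, Ideal.Quotient.mk Q y = x ∧ (y = a ∨ y = b ∨ y = c ∨ y = d) := by
    intro x hx
    rw [← eval_map_algebraMap, hmap, hf] at hx
    simp only [Polynomial.map_mul, Polynomial.map_sub, map_X, map_C, eval_mul, eval_sub, eval_X,
      eval_C, mul_eq_zero, sub_eq_zero] at hx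
    rcases hx with ((h | h) | h) | h
    · exact ⟨a, h.symm, by simp⟩
    · exact ⟨b, h.symm, by simp⟩
    · exact ⟨c, h.symm, by simp⟩
    · exact ⟨d, h.symm, by simp⟩
  have hroots : ∀ y : 𝓞 K, aeval y f = 0 ↔ (y = a ∨ y = b ∨ y = c ∨ y = d) := by
    intro y
    rw [← eval_map_algebraMap, hf]
    simp [mul_eq_zero, sub_eq_zero, or_assoc]
  -- distinct roots of `f` stay distinct modulo `Q`, since otherwise `disc f` lies in `Q`
  have hinj : ∀ y z : 𝓞 K, (y = a ∨ y = b ∨ y = c ∨ y = d) → (z = a ∨ z = b ∨ z = c ∨ z = d) →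
      Ideal.Quotient.mk Q y = Ideal.Quotient.mk Q z → y = z := by
    intro y z hy hz hyz
    by_contra hne
    apply hdisc
    rw [← Ideal.Quotient.eq_zero_iff_mem]
    rcases hy with rfl | rfl | rfl | rfl <;> rcases hz with rfl | rfl | rfl | rfl <;>
      first
      | exact absurd rfl hne
      | simp [hyz]
  refine ⟨σ, ?_, ?_⟩
  · intro n hn h hi hd
    refine natDegree_dvd_of_roots_pow_eq (k := 𝓞 K ⧸ Q) (hmonic.map _).ne_zero ?_ ?_ hi hd
    · rw [hmap, hf]
      simp only [Polynomial.map_mul, Polynomial.map_sub, map_X, map_C]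
      exact (((Splits.X_sub_C _).mul (Splits.X_sub_C _)).mul (Splits.X_sub_C _)).mul
        (Splits.X_sub_C _)
    · intro x hx
      obtain ⟨y, rfl, -⟩ := hroot x hx
      rw [← hfrobn, hn, one_smul]
  · rintro ⟨r, hr⟩
    obtain ⟨y, hy, hy4⟩ := hroot (algebraMap (ZMod p) _ r)
      (by rw [aeval_algebraMap_apply, coe_aeval_eq_eval, hr.eq_zero, map_zero])
    have hσy : σ • y = y := by
      refine hinj _ _ ?_ hy4 ?_
      · rw [← hroots] at hy4 ⊢
        have := aeval_algHom_apply (MulSemiringAction.toAlgHom ℤ (𝓞 K) σ) y f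
        rw [hy4, map_zero] at this
        exact this
      · rw [hfrob, hy, ← map_pow, ZMod.pow_card]
    refine ⟨algebraMap (𝓞 K) K y, ?_, ?_⟩
    · rw [aeval_algebraMap_apply, (hroots y).2 hy4, map_zero]
    · exact congrArg (algebraMap (𝓞 K) K) hσy

/-- The stabilizer of a root `x` of `f` is the Galois group of `K` over `ℚ(x)`, which has order
`12 / 4 = 3`. -/
theorem pow_three_eq_one_of_fixes_root (f : ℤ[X]) (hmonic : f.Monic) (hirr : Irreducible f)
    (hdeg : f.natDegree = 4) {K : Type*} [Field K] [NumberField K] [IsGalois ℚ K]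
    (hcard : Nat.card Gal(K/ℚ) = 12) (σ : Gal(K/ℚ)) {x : K} (hx : aeval x f = 0)
    (hσ : σ x = x) : σ ^ 3 = 1 := by
  have hfin : Module.finrank ℚ (IntermediateField.adjoin ℚ {x}) = 4 := by
    have hxi : IsIntegral ℚ x := Algebra.IsIntegral.isIntegral x
    rw [IntermediateField.adjoin.finrank hxi]
    have hi : Irreducible (f.map (algebraMap ℤ ℚ)) :=
      (hmonic.irreducible_iff_irreducible_map_fraction_map (K := ℚ)).1 hirr
    rw [← minpoly.eq_of_irreducible_of_monic hi (by rw [aeval_map_algebraMap, hx])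
      (hmonic.map _), hmonic.natDegree_map, hdeg]
  have hmul := Module.finrank_mul_finrank ℚ (IntermediateField.adjoin ℚ {x}) K
  rw [hfin, ← IsGalois.card_aut_eq_finrank ℚ K, hcard,
    ← IsGalois.card_fixingSubgroup_eq_finrank] at hmul
  have h3 : Nat.card (IntermediateField.adjoin ℚ {x}).fixingSubgroup = 3 := by omega
  have hmem : σ ∈ (IntermediateField.adjoin ℚ {x}).fixingSubgroup := by
    have hle : IntermediateField.adjoin ℚ {x} ≤
        IntermediateField.fixedField (Subgroup.zpowers σ) := by
      rw [IntermediateField.adjoin_simple_le_iff]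
      rintro ⟨τ, hτ⟩
      have hle : Subgroup.zpowers σ ≤ MulAction.stabilizer Gal(K/ℚ) x := by
        rw [Subgroup.zpowers_le]; exact hσ
      exact hle hτ
    exact (IntermediateField.le_iff_le _ _).1 hle (Subgroup.mem_zpowers σ)
  have := pow_card_eq_one' (x := (⟨σ, hmem⟩ : (IntermediateField.adjoin ℚ {x}).fixingSubgroup))
  rw [h3] at this
  exact congrArg Subtype.val this

theorem alternatingGroup_four_pow_eq_one :
    ∀ g : alternatingGroup (Fin 4), g ^ 2 = 1 ∨ g ^ 3 = 1 := by
  decide +kernel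

/-- The result for an arbitrary splitting field `K`. The `ℚ`-algebra structure on `K` is left
arbitrary, so that the result applies to the one on `Polynomial.SplittingField`, which is built
differently from the `DivisionRing.toRatAlgebra` of a field of characteristic zero. -/
theorem factorization_of_gal_alternatingGroup (f : ℤ[X]) (hmonic : f.Monic)
    (hirr : Irreducible f) (hdeg : f.natDegree = 4) (K : Type*) [Field K] [NumberField K]
    [alg : Algebra ℚ K] [hsf : IsSplittingField ℚ K (f.map (Int.castRingHom ℚ))]
    (hGal : Nonempty (Gal(K/ℚ) ≃* alternatingGroup (Fin 4)))
    (p : ℕ) [Fact p.Prime] (hpd : ¬ (p : ℤ) ∣ quarticDisc f) :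
    ¬ Irreducible (f.map (Int.castRingHom (ZMod p))) ∧
      ∀ g : (ZMod p)[X], g.Monic → Irreducible g → g.natDegree = 2 →
        g ∣ f.map (Int.castRingHom (ZMod p)) →
          Irreducible ((f.map (Int.castRingHom (ZMod p))) /ₘ g) ∧
            ((f.map (Int.castRingHom (ZMod p))) /ₘ g).natDegree = 2 := by
  obtain rfl : alg = DivisionRing.toRatAlgebra := Subsingleton.elim _ _
  have hirrQ : Irreducible (f.map (Int.castRingHom ℚ)) :=
    (hmonic.irreducible_iff_irreducible_map_fraction_map (K := ℚ)).1 hirr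
  have : IsGalois ℚ K := IsGalois.of_separable_splitting_field hirrQ.separable
  have hs : (f.map (algebraMap ℤ K)).Splits := by
    have := hsf.splits
    rwa [map_map, RingHom.ext_int ((algebraMap ℚ K).comp (Int.castRingHom ℚ))
      (algebraMap ℤ K)] at this
  obtain ⟨e⟩ := hGal
  have hcard : Nat.card (Gal(K/ℚ)) = 12 := by
    rw [Nat.card_congr e.toEquiv, nat_card_alternatingGroup]
    simp [Nat.factorial]
  obtain ⟨σ, hσ, hfix⟩ := exists_frobenius f hmonic hdeg p hpd K hs
  have hm := hmonic.map (Int.castRingHom (ZMod p))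
  have hd4 : (f.map (Int.castRingHom (ZMod p))).natDegree = 4 := by
    rw [hmonic.natDegree_map, hdeg]
  refine ⟨fun hi => ?_, fun g hg hgi hg2 hgd => ?_⟩
  · have h23 : σ ^ 2 = 1 ∨ σ ^ 3 = 1 := by
      rcases alternatingGroup_four_pow_eq_one (e σ) with h | h
      · left; exact e.injective ((map_pow e σ 2).trans (h.trans (map_one e).symm))
      · right; exact e.injective ((map_pow e σ 3).trans (h.trans (map_one e).symm))
    rcases h23 with h | h
    · have := hσ 2 h _ hi dvd_rfl
      rw [hd4] at this
      omega
    · have := hσ 3 h _ hi dvd_rfl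
      rw [hd4] at this
      omega
  · set F := f.map (Int.castRingHom (ZMod p))
    have hq2 : (F /ₘ g).natDegree = 2 := by rw [natDegree_divByMonic F hg, hd4, hg2]
    refine ⟨?_, hq2⟩
    have hmul : g * (F /ₘ g) = F := by
      
      have := modByMonic_add_div F g
      rwa [(modByMonic_eq_zero_iff_dvd hg).2 hgd, zero_add] at this
    -- a quadratic with no root is irreducible
    rw [irreducible_iff_roots_eq_zero_of_degree_le_three hq2.ge (by omega)]
    by_contra hne
    obtain ⟨r, hr⟩ := Multiset.exists_mem_of_ne_zero hne
    obtain ⟨x, hx, hσx⟩ := hfix ⟨r, ((mem_roots'.1 hr).2).dvd (Dvd.intro_left g hmul)⟩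
    have h3 := pow_three_eq_one_of_fixes_root f hmonic hirr hdeg hcard σ hx hσx
    have := hσ 3 h3 g hgi hgd
    rw [hg2] at this
    omega

end

/-- if the Galois group of `f` is `A₄`, then for `p ∤ disc f` the reduction
of `f` mod `p` is reducible, and whenever a monic irreducible quadratic `g` divides it,
the quotient is also an irreducible quadratic. -/
theorem statement14 (f : Polynomial ℤ) (hmonic : f.Monic) (hirr : Irreducible f)
    (hdeg : f.natDegree = 4)
    (hGal : Nonempty (galF f ≃* alternatingGroup (Fin 4)))
    (p : ℕ) [Fact p.Prime] (hpd : ¬ (p : ℤ) ∣ quarticDisc f) :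
    ¬ Irreducible (f.map (Int.castRingHom (ZMod p))) ∧
      ∀ g : Polynomial (ZMod p), g.Monic → Irreducible g → g.natDegree = 2 →
        g ∣ f.map (Int.castRingHom (ZMod p)) →
          Irreducible ((f.map (Int.castRingHom (ZMod p))) /ₘ g) ∧
            ((f.map (Int.castRingHom (ZMod p))) /ₘ g).natDegree = 2 := by
  have : NumberField (f.map (Int.castRingHom ℚ)).SplittingField :=
    { to_charZero := charZero_of_injective_algebraMap (algebraMap ℚ _).injective
      to_finiteDimensional := by
        convert! (inferInstance : FiniteDimensional ℚ (f.map (Int.castRingHom ℚ)).SplittingField) }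
  exact factorization_of_gal_alternatingGroup f hmonic hirr hdeg
    (f.map (Int.castRingHom ℚ)).SplittingField hGal p hpd
end

section
/- Let n = 8·3·5·|disc(f)| and let q be a positive squarefree integer with q ≡ 1 (mod n) such that for every prime p dividing q, the reduction of f modulo p has a root in 𝔽_p. Then H_q is everywhere locally solvable. -/
/-! The primes fall into three classes. If `q` is a nonzero square modulo an odd `p`, or `p = 2`
and `q ≡ 1 (mod 8)`, then `q` is a square in `ℚ_p` by Hensel's lemma. If `p ∣ q`, the congruence
forces `p ∤ disc f`, so the given root of `f` mod `p` is simple and lifts to a root of `f` in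
`ℤ_p`, giving a point with `y = 0`. In the remaining case `p ≥ 7`, `p ∤ disc f`, and `q` is a
nonresidue, so it suffices that `f` takes modulo `p` some value that is zero (the root is simple
and lifts) or a nonresidue (then `q f(x)` is a `p`-adic square).

The usual source of this last fact is the Hasse–Weil bound: if all values of `f` were nonzero
squares, the curve `y² = f(x)` would have `2p + 2` points. An elementary argument is enough for
this extreme case (`exists_value_not_one`), in the spirit of Stepanov's method. With
`m = (p - 1) / 2`, the assumption means that `h = X ^ p - X` divides `f ^ m - 1`. Differentiating
this divisibility twice and using that `2 m = -1` in `𝔽_p`, one finds a polynomial `k` of degree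
at most `2` with `h (f' k - 2 f k') = f f'' - 4 f k - f'² / 2`. The right side has degree at most
`6 < p`, hence vanishes, so `f ∣ f'²`, contradicting separability of `f`.

Separability mod `p` comes from an explicit expression of the discriminant in the ideal generated
by `f` and `f'` in `ℤ[X]` (`disc_bezout`). Primes dividing `30 * disc f` need no separate argument:
the congruence puts them in the first class, and if `disc f = 0` it does so for every prime. -/

open Polynomial

/-- The discriminant lies in the ideal `(f, f')` of `ℤ[X]`. The cofactors are the last-column
cofactors of the Sylvester matrix of `f` and `f'`. -/
lemma disc_bezout (f : ℤ[X]) (hmonic : f.Monic) (hdeg : f.natDegree = 4) :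
    ∃ A B : ℤ[X], A * f + B * derivative f = C (quarticDisc f) := by
  have h4 : f.coeff 4 = 1 := by rw [← hdeg]; exact hmonic
  have hf := f.as_sum_range_C_mul_X_pow
  rw [hdeg] at hf
  simp only [Finset.sum_range_succ, Finset.sum_range_zero, h4, pow_zero, pow_one, zero_add,
    mul_one, C_1, one_mul] at hf
  unfold quarticDisc
  generalize f.coeff 3 = b at *
  generalize f.coeff 2 = c at *
  generalize f.coeff 1 = d at *
  generalize f.coeff 0 = e at *
  refine ⟨C (144 * d ^ 2 - 128 * c * e + 32 * c ^ 3 - 112 * b * c * d + 48 * b ^ 2 * e - 8 * b ^ 2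
        * c ^ 2 + 24 * b ^ 3 * d) * X ^ 2 +
    C (-192 * d * e - 16 * c ^ 2 * d + 120 * b * d ^ 2 + 32 * b * c * e + 24 * b * c ^ 3 -
        80 * b ^ 2 * c * d - 6 * b ^ 3 * c ^ 2 + 18 * b ^ 4 * d) * X +
    C (256 * e ^ 2 + 96 * c * d ^ 2 - 128 * c ^ 2 * e + 16 * c ^ 4 - 176 * b * d * e - 68 *
        b * c ^ 2 * d + b ^ 2 * d ^ 2 + 144 * b ^ 2 * c * e - 4 * b ^ 2 * c ^ 3 + 15 * b ^ 3
        * c * d - 27 * b ^ 4 * e),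
    C (-36 * d ^ 2 + 32 * c * e - 8 * c ^ 3 + 28 * b * c * d - 12 * b ^ 2 * e + 2 * b ^ 2 *
        c ^ 2 - 6 * b ^ 3 * d) * X ^ 3 +
    C (48 * d * e + 4 * c ^ 2 * d - 39 * b * d ^ 2 - 8 * b * c ^ 3 + 27 * b ^ 2 * c * d - 3
        * b ^ 3 * e + 2 * b ^ 3 * c ^ 2 - 6 * b ^ 4 * d) * X ^ 2 +
    C (-64 * e ^ 2 - 42 * c * d ^ 2 + 48 * c ^ 2 * e - 8 * c ^ 4 + 56 * b * d * e + 32 * b *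
        c ^ 2 * d - b ^ 2 * d ^ 2 - 50 * b ^ 2 * c * e + 2 * b ^ 2 * c ^ 3 - 7 * b ^ 3 * c *
        d + 9 * b ^ 4 * e) * X +
    C (-27 * d ^ 3 + 48 * c * d * e - 4 * c ^ 3 * d - 16 * b * e ^ 2 + 18 * b * c * d ^ 2 -
        12 * b * c ^ 2 * e - 7 * b ^ 2 * d * e + b ^ 2 * c ^ 2 * d - 4 * b ^ 3 * d ^ 2 + 3 *
        b ^ 3 * c * e), ?_⟩
  rw [hf]
  simp only [derivative_add, derivative_C_mul, derivative_X,
    derivative_X_pow, derivative_C, C_add, C_sub, C_mul, C_pow, map_ofNat, map_natCast]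
  simp only [C_neg, map_ofNat]
  push_cast
  ring

lemma isCoprime_derivative_mod (f : ℤ[X]) (hmonic : f.Monic) (hdeg : f.natDegree = 4)
    (p : ℕ) [Fact p.Prime] (hp : ¬ (p : ℤ) ∣ quarticDisc f) :
    IsCoprime (f.map (Int.castRingHom (ZMod p)))
      (derivative (f.map (Int.castRingHom (ZMod p)))) := by
  obtain ⟨A, B, h⟩ := disc_bezout f hmonic hdeg
  have h' := congrArg (Polynomial.map (Int.castRingHom (ZMod p))) h
  have hD : ((quarticDisc f : ℤ) : ZMod p) ≠ 0 := by
    rwa [Ne, ZMod.intCast_zmod_eq_zero_iff_dvd]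
  simp only [Polynomial.map_add, Polynomial.map_mul, ← derivative_map] at h'
  refine ⟨C ((quarticDisc f : ZMod p)⁻¹) * A.map (Int.castRingHom (ZMod p)),
    C ((quarticDisc f : ZMod p)⁻¹) * B.map (Int.castRingHom (ZMod p)), ?_⟩
  rw [mul_assoc, mul_assoc, ← mul_add, h']
  rw [Polynomial.map_C, eq_intCast, ← C_mul, inv_mul_cancel₀ hD, C_1]

/-- By Euler's criterion, this says that a separable quartic over `𝔽_p`, `p ≥ 7`, does not take
only nonzero square values. -/
lemma exists_value_not_one (p : ℕ) [Fact p.Prime] (hp7 : 7 ≤ p) (f : (ZMod p)[X])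
    (hdeg : f.natDegree = 4) (hcop : IsCoprime f (derivative f)) :
    ∃ x, f.eval x ^ (p / 2) ≠ 1 := by
  by_contra! hall
  have hp : p.Prime := Fact.out
  have hodd : 2 * (p / 2) + 1 = p := by
    have := hp.eq_two_or_odd
    omega
  set m := p / 2 with hm
  have h2 : (2 : ZMod p) * m + 1 = 0 := by
    have : ((2 * m + 1 : ℕ) : ZMod p) = 0 := by rw [hodd]; simp
    exact_mod_cast this
  have h2P : (2 : (ZMod p)[X]) * (m : (ZMod p)[X]) + 1 = 0 := by
    have := congrArg C h2
    simpa [map_ofNat C] using this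
  have h20 : (2 : ZMod p) ≠ 0 := by
    intro h0; rw [h0] at h2; simp at h2
  set h : (ZMod p)[X] := X ^ p - X with hh
  have hhdeg : h.natDegree = p := FiniteField.X_pow_card_sub_X_natDegree_eq _ hp.one_lt
  have hh0 : h ≠ 0 := FiniteField.X_pow_card_sub_X_ne_zero _ hp.one_lt
  have hh' : derivative h = -1 := by simp [hh, derivative_X_pow]
  have hroots : h.roots = Finset.univ.val := by
    have := FiniteField.roots_X_pow_card_sub_X (ZMod p)
    rwa [ZMod.card] at this
  have hdvd : h ∣ f ^ m - 1 := by
    have hF0 : f ^ m - 1 ≠ 0 := by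
      intro h0
      have h1 : (f ^ m).natDegree = (1 : (ZMod p)[X]).natDegree := by
        rw [sub_eq_zero.mp h0]
      rw [natDegree_pow, hdeg, natDegree_one] at h1
      omega
    have hsp : h.Splits := by
      rw [splits_iff_card_roots, hroots, hhdeg]
      exact ZMod.card p
    refine (Splits.dvd_iff_roots_le_roots hsp hh0 hF0).mpr ?_
    rw [hroots]
    refine (Multiset.le_iff_subset Finset.univ.nodup).mpr fun x _ => ?_
    rw [mem_roots hF0]
    simp [IsRoot, hall x]
  obtain ⟨g, hg⟩ := hdvd
  have hgdeg : g.natDegree + p = 4 * m := by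
    have h1 : (f ^ m - 1).natDegree = 4 * m := by
      rw [natDegree_sub_eq_left_of_natDegree_lt]
      · rw [natDegree_pow, hdeg, mul_comm]
      · rw [natDegree_pow, hdeg, natDegree_one]; omega
    have hg0 : g ≠ 0 := by
      rintro rfl
      rw [hg] at h1; simp at h1; omega
    rw [hg, natDegree_mul hh0 hg0, hhdeg] at h1
    omega
  set f' := derivative f with hf'
  set g' := derivative g with hg'
  -- Differentiating `f ^ m - 1 = h g` and eliminating `f ^ m` gives `h k = m f' + f g`.
  have hder : (m : (ZMod p)[X]) * f ^ (m - 1) * f' = h * g' - g := by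
    have := congrArg derivative hg
    rw [derivative_mul, hh', derivative_sub, derivative_one, derivative_pow] at this
    simp only [C_eq_natCast] at this
    linear_combination this
  have hpow : f ^ m = f ^ (m - 1) * f := by
    rw [← pow_succ]; congr 1; omega
  obtain ⟨k, hk⟩ : ∃ k, k = f * g' - (m : (ZMod p)[X]) * f' * g := ⟨_, rfl⟩
  have hhk : h * k = (m : (ZMod p)[X]) * f' + f * g := by
    rw [hk]
    rw [hpow] at hg
    linear_combination (m : (ZMod p)[X]) * f' * hg - f * hder
  have hf'deg : f'.natDegree ≤ 3 := (natDegree_derivative_le f).trans (by omega)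
  have hf''deg : (derivative f').natDegree ≤ 2 := (natDegree_derivative_le f').trans (by omega)
  have hkdeg : k.natDegree ≤ 2 := by
    by_cases hk0 : k = 0
    · simp [hk0]
    have h1 : (h * k).natDegree ≤ p + 2 := by
      rw [hhk]
      refine natDegree_add_le_of_degree_le ?_ ?_
      · rw [← C_eq_natCast]
        exact (natDegree_C_mul_le _ _).trans (by omega)
      · exact natDegree_mul_le.trans (by omega)
    rw [natDegree_mul hh0 hk0, hhdeg] at h1
    omega
  have hder2 : h * derivative k - k =
      (m : (ZMod p)[X]) * derivative f' + f' * g + f * g' := by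
    have := congrArg derivative hhk
    rw [derivative_mul, hh', derivative_add, derivative_mul, derivative_mul,
      derivative_natCast] at this
    linear_combination this
  have key : h * (2 * (f' * k - 2 * (f * derivative k))) =
      2 * (f * derivative f') - 8 * (f * k) - f' ^ 2 := by
    -- Multiplying `hder2` by `f` lets `hhk` and `hk` eliminate `g` and `g'`.
    linear_combination 2 * f' * hhk - 4 * f * hder2 + 4 * f * hk +
      (f' ^ 2 - 2 * (f * derivative f') - 2 * (f * f' * g)) * h2P
  have hR : 2 * (f' * k - 2 * (f * derivative k)) = 0 := by
    by_contra h0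
    have h1 : (h * (2 * (f' * k - 2 * (f * derivative k)))).natDegree ≤ 6 := by
      rw [key]
      have e2 : (2 : (ZMod p)[X]) = C 2 := (map_ofNat C 2).symm
      have e8 : (8 : (ZMod p)[X]) = C 8 := (map_ofNat C 8).symm
      rw [e2, e8]
      refine (natDegree_sub_le_of_le (natDegree_sub_le_of_le (n := 6) (m := 6) ?_ ?_) (n := 6) ?_).trans
        (by simp)
      · exact (natDegree_C_mul_le _ _).trans (natDegree_mul_le.trans (by omega))
      · exact (natDegree_C_mul_le _ _).trans (natDegree_mul_le.trans (by omega))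
      · exact natDegree_pow_le.trans (by omega)
    rw [natDegree_mul hh0 h0, hhdeg] at h1
    omega
  rw [hR, mul_zero] at key
  have hd : f ∣ f' ^ 2 := ⟨2 * derivative f' - 8 * k, by linear_combination key⟩
  have hu : IsUnit f := (hcop.pow_right (n := 2)).isUnit_of_dvd' dvd_rfl hd
  have := natDegree_eq_zero_of_isUnit hu
  omega

/-- Hensel's lemma: simple roots mod `p` lift to `ℤ_p`. -/
lemma exists_padicInt_root (p : ℕ) [Fact p.Prime] (F : ℤ[X]) (a : ℤ)
    (h0 : (p : ℤ) ∣ F.eval a) (h1 : ¬ (p : ℤ) ∣ (derivative F).eval a) :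
    ∃ z : ℤ_[p], aeval z F = 0 := by
  have e : ∀ G : ℤ[X], aeval (a : ℤ_[p]) G = ((G.eval a : ℤ) : ℤ_[p]) := fun G => by
    simpa using aeval_algebraMap_apply_eq_algebraMap_eval (A := ℤ_[p]) a G
  obtain ⟨z, hz, -⟩ := hensels_lemma (p := p) (F := F) (a := (a : ℤ_[p])) (by
    rw [e, e]
    have : ‖(((derivative F).eval a : ℤ) : ℤ_[p])‖ = 1 :=
      le_antisymm (PadicInt.norm_le_one _)
        (not_lt.mp fun h => h1 ((PadicInt.norm_int_lt_one_iff_dvd _).mp h))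
    rw [this, one_pow]
    exact (PadicInt.norm_int_lt_one_iff_dvd _).mpr h0)
  exact ⟨z, hz⟩

lemma isSquare_padic_of_mod (p : ℕ) [Fact p.Prime] (hp2 : p ≠ 2) (u : ℤ) (hu0 : (u : ZMod p) ≠ 0)
    (hu : IsSquare (u : ZMod p)) : IsSquare (u : ℚ_[p]) := by
  obtain ⟨s, hs⟩ := hu
  obtain ⟨a, rfl⟩ := ZMod.intCast_surjective s
  have h20 : ((2 : ℤ) : ZMod p) ≠ 0 := by
    rw [Ne, ZMod.intCast_zmod_eq_zero_iff_dvd]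
    intro h
    exact hp2 ((Nat.prime_dvd_prime_iff_eq Fact.out Nat.prime_two).mp (by exact_mod_cast h))
  have ha0 : (a : ZMod p) ≠ 0 := by
    intro h; rw [h, mul_zero] at hs; exact hu0 hs
  obtain ⟨z, hz⟩ := exists_padicInt_root p (X ^ 2 - C u) a (by
      rw [← ZMod.intCast_zmod_eq_zero_iff_dvd]
      simp [hs, pow_two]) (by
      rw [← ZMod.intCast_zmod_eq_zero_iff_dvd]
      have : ((2 * a : ℤ) : ZMod p) ≠ 0 := by
        push_cast at h20 ⊢
        exact mul_ne_zero h20 ha0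
      simpa [derivative_X_pow] using this)
  refine ⟨(z : ℚ_[p]), ?_⟩
  have hz' : z * z = (u : ℤ_[p]) := by
    simp [sub_eq_zero] at hz
    rw [← hz, pow_two]
  rw [← PadicInt.coe_mul, hz', PadicInt.coe_intCast]

lemma isSquare_padic_two (u : ℤ) (hu : (8 : ℤ) ∣ u - 1) : IsSquare (u : ℚ_[2]) := by
  obtain ⟨z, hz, -⟩ := hensels_lemma (p := 2) (F := X ^ 2 - C u) (a := (1 : ℤ_[2])) (by
    have h1 : aeval (1 : ℤ_[2]) (X ^ 2 - C u) = ((1 - u : ℤ) : ℤ_[2]) := by simp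
    have h2 : aeval (1 : ℤ_[2]) (derivative (X ^ 2 - C u)) = ((2 : ℕ) : ℤ_[2]) := by
      simp [map_ofNat]
    rw [h1, h2, PadicInt.norm_p]
    have h3 : ‖((1 - u : ℤ) : ℤ_[2])‖ ≤ (2 : ℕ) ^ (-((3 : ℕ) : ℤ)) := by
      refine PadicInt.norm_int_le_pow_iff_dvd.mpr ?_
      norm_num
      rwa [dvd_sub_comm]
    refine h3.trans_lt ?_
    norm_num)
  refine ⟨(z : ℚ_[2]), ?_⟩
  have hz' : z * z = (u : ℤ_[2]) := by
    simp [sub_eq_zero] at hz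
    rw [← hz, pow_two]
  rw [← PadicInt.coe_mul, hz', PadicInt.coe_intCast]

lemma exists_real_point (f : ℤ[X]) (hmonic : f.Monic) (hdeg : f.natDegree = 4) (q : ℤ)
    (hqpos : 0 < q) :
    ∃ x y : ℝ, (q : ℝ) * y ^ 2 = (f.map (Int.castRingHom ℝ)).eval x := by
  have hm := hmonic.map (Int.castRingHom ℝ)
  have ht := (f.map (Int.castRingHom ℝ)).tendsto_atTop_of_leadingCoeff_nonneg
    (by
      rw [← natDegree_pos_iff_degree_pos, hmonic.natDegree_map, hdeg]; norm_num)
    (by rw [hm.leadingCoeff]; exact zero_le_one)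
  obtain ⟨x, hx⟩ := (ht.eventually_ge_atTop 0).exists
  have hq : (0 : ℝ) < q := by exact_mod_cast hqpos
  refine ⟨x, Real.sqrt ((f.map (Int.castRingHom ℝ)).eval x / q), ?_⟩
  rw [Real.sq_sqrt (div_nonneg hx hq.le)]
  field_simp

lemma eval_map_intCast {R : Type*} [CommRing R] (f : ℤ[X]) (a : ℤ) :
    (f.map (Int.castRingHom R)).eval (a : R) = ((f.eval a : ℤ) : R) := by
  rw [← eq_intCast (Int.castRingHom R) a, eval_map, eval₂_at_apply, eq_intCast]

/-- A root of `f` mod a prime not dividing the discriminant gives a point with `y = 0`. -/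
lemma locallySolvableAt_of_root (f : ℤ[X]) (hmonic : f.Monic) (hdeg : f.natDegree = 4) (q : ℤ)
    (p : ℕ) [Fact p.Prime] (hp : ¬ (p : ℤ) ∣ quarticDisc f) (a : ℤ)
    (ha : (p : ℤ) ∣ f.eval a) : LocallySolvableAt f q p := by
  obtain ⟨A, B, h⟩ := disc_bezout f hmonic hdeg
  have h' := congrArg (Polynomial.eval a) h
  simp only [eval_add, eval_mul, eval_C] at h'
  obtain ⟨z, hz⟩ := exists_padicInt_root p f a ha fun hd => hp <| by
    rw [← h']
    exact dvd_add (ha.mul_left _) (hd.mul_left _)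
  refine Or.inl ⟨z, 0, ?_⟩
  have h2 : eval₂ (Int.castRingHom ℚ_[p]) (z : ℚ_[p]) f = 0 := by
    have := congrArg (PadicInt.Coe.ringHom (p := p)) hz
    rw [aeval_def, hom_eval₂, map_zero] at this
    rwa [Subsingleton.elim (Int.castRingHom ℚ_[p])
      (PadicInt.Coe.ringHom.comp (algebraMap ℤ ℤ_[p]))]
  rw [eval_map, h2]
  simp

/-- a positive squarefree `q ≡ 1 (mod 8·3·5·|disc f|)` all of whose prime
factors are such that `f` has a root modulo them gives an everywhere locally solvable
`H_q`. -/
theorem statement17 (f : Polynomial ℤ) (hmonic : f.Monic) (hirr : Irreducible f)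
    (hdeg : f.natDegree = 4) (q : ℤ) (hqpos : 0 < q) (hqsf : Squarefree q)
    (hcong : q ≡ 1 [ZMOD (8 * 3 * 5 * |quarticDisc f|)])
    (hroot : ∀ p : ℕ, p.Prime → (p : ℤ) ∣ q →
      ∃ x₀ : ZMod p, (f.map (Int.castRingHom (ZMod p))).eval x₀ = 0) :
    EverywhereLocallySolvable f q := by
  refine ⟨exists_real_point f hmonic hdeg q hqpos, fun p hpf => ?_⟩
  have hp : p.Prime := hpf.out
  have hn : (8 * 3 * 5 * |quarticDisc f|) ∣ q - 1 := hcong.symm.dvd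
  by_cases hp2 : p = 2
  · subst hp2
    exact Or.inr (isSquare_padic_two q
      (dvd_trans ⟨15 * |quarticDisc f|, by ring⟩ hn))
  have hone : ∀ d : ℤ, d ∣ 8 * 3 * 5 * |quarticDisc f| → (p : ℤ) ∣ d → (q : ZMod p) = 1 := by
    intro d hd hpd
    have := (ZMod.intCast_zmod_eq_zero_iff_dvd _ p).mpr (hpd.trans (hd.trans hn))
    push_cast at this
    exact sub_eq_zero.mp this
  by_cases hsq : (q : ZMod p) ≠ 0 ∧ IsSquare (q : ZMod p)
  · exact Or.inr (isSquare_padic_of_mod p hp2 q hsq.1 hsq.2)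
  -- From here on `p` does not divide the modulus of the congruence.
  have hndvd : ∀ d : ℤ, d ∣ 8 * 3 * 5 * |quarticDisc f| → ¬ (p : ℤ) ∣ d := by
    intro d hd hpd
    refine hsq ?_
    rw [hone d hd hpd]
    exact ⟨one_ne_zero, IsSquare.one⟩
  have hpD : ¬ (p : ℤ) ∣ quarticDisc f :=
    hndvd _ (((dvd_abs _ _).mpr dvd_rfl).mul_left _)
  by_cases hq0 : (q : ZMod p) = 0
  · obtain ⟨x₀, hx₀⟩ := hroot p hp ((ZMod.intCast_zmod_eq_zero_iff_dvd _ p).mp hq0)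
    obtain ⟨a, rfl⟩ := ZMod.intCast_surjective x₀
    rw [eval_map_intCast, ZMod.intCast_zmod_eq_zero_iff_dvd] at hx₀
    exact locallySolvableAt_of_root f hmonic hdeg q p hpD a hx₀
  have hp7 : 7 ≤ p := by
    have h3 : p ≠ 3 := by
      rintro rfl
      exact hndvd 3 ⟨40 * |quarticDisc f|, by ring⟩ dvd_rfl
    have h5 : p ≠ 5 := by
      rintro rfl
      exact hndvd 5 ⟨24 * |quarticDisc f|, by ring⟩ dvd_rfl
    by_contra! hlt
    interval_cases p <;> first | omega | (revert hp; decide)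
  obtain ⟨x₀, hx₀⟩ := exists_value_not_one p hp7 (f.map (Int.castRingHom (ZMod p)))
    (by rw [hmonic.natDegree_map, hdeg])
    (isCoprime_derivative_mod f hmonic hdeg p hpD)
  obtain ⟨a, rfl⟩ := ZMod.intCast_surjective x₀
  rw [eval_map_intCast] at hx₀
  by_cases hfa : ((f.eval a : ℤ) : ZMod p) = 0
  · exact locallySolvableAt_of_root f hmonic hdeg q p hpD a
      ((ZMod.intCast_zmod_eq_zero_iff_dvd _ p).mp hfa)
  -- Now `q` and `f(a)` are both nonresidues, so `q f(a)` is a residue.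
  have hqn : ¬ (q : ZMod p) ^ (p / 2) = 1 := fun h =>
    hsq ⟨hq0, (ZMod.euler_criterion p hq0).mpr h⟩
  have hprod : IsSquare ((q * f.eval a : ℤ) : ZMod p) := by
    have h0 : ((q * f.eval a : ℤ) : ZMod p) ≠ 0 := by
      push_cast; exact mul_ne_zero hq0 hfa
    rw [ZMod.euler_criterion p h0]
    push_cast
    rw [mul_pow, (ZMod.pow_div_two_eq_neg_one_or_one p hq0).resolve_left hqn,
      (ZMod.pow_div_two_eq_neg_one_or_one p hfa).resolve_left hx₀]
    ring
  obtain ⟨w, hw⟩ := isSquare_padic_of_mod p hp2 _ (by push_cast; exact mul_ne_zero hq0 hfa) hprod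
  have hqQ : (q : ℚ_[p]) ≠ 0 := by exact_mod_cast hqpos.ne'
  refine Or.inl ⟨a, w / q, ?_⟩
  rw [eval_map_intCast]
  push_cast at hw
  field_simp
  linear_combination -hw
end
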